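/- Let M be a matching of maximum weight among all matchings of size n/3 in G. Then there exists a perfect 3-path packing P of G with w(P) ≥ (2/3)·w(M) + (1/12)·w(M'_1) + (1/6)·w(M''_1) + (1/4)·w(M'''_1) + (1/6)·w(M_2) + (1/4)·w(M_3) + (1/3)·w(M_4) + (1/2)·w(X_2) + (1/2)·w(X_3) + (1/2)·w(X_4) + w(X_5) + (1/2)·w(X_7) − (1/4)·w(Y_7) + (1/4)·w(P*_6) + (1/4)·w(P*_8). -/

import Mathlib

open Finset
open scoped Classical

namespace MW3PP

/-- A 3-path `xyz`: a path on three distinct vertices with middle vertex `y`. -/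
structure P3 (V : Type*) where
  x : V
  y : V
  z : V
  hxy : x ≠ y
  hyz : y ≠ z
  hxz : x ≠ z

variable {V : Type*} [Fintype V] [DecidableEq V]

/-- The vertex set of a 3-path. -/
def P3.verts (p : P3 V) : Finset V := {p.x, p.y, p.z}

/-- The two edges of a 3-path. -/
def P3.edges (p : P3 V) : Finset (Sym2 V) := {s(p.x, p.y), s(p.y, p.z)}

/-- The weight of a 3-path. -/
def P3.wt (w : Sym2 V → ℝ) (p : P3 V) : ℝ := w s(p.x, p.y) + w s(p.y, p.z)

/-- The total weight of a set of edges. -/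
def ew (w : Sym2 V → ℝ) (F : Finset (Sym2 V)) : ℝ := ∑ e ∈ F, w e

/-- The total weight of a set of 3-paths. -/
def pw (w : Sym2 V → ℝ) (P : Finset (P3 V)) : ℝ := ∑ p ∈ P, p.wt w

/-- `∑_{xyz ∈ S} max (w (xy)) (w (yz))`. -/
def maxSum (w : Sym2 V → ℝ) (S : Finset (P3 V)) : ℝ :=
  ∑ p ∈ S, max (w s(p.x, p.y)) (w s(p.y, p.z))

/-- A perfect 3-path packing: `n/3` pairwise vertex-disjoint 3-paths covering all vertices. -/
def IsPacking (P : Finset (P3 V)) : Prop :=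
  P.card = Fintype.card V / 3 ∧
  (∀ p ∈ P, ∀ q ∈ P, p ≠ q → Disjoint p.verts q.verts) ∧
  (∀ v : V, ∃ p ∈ P, v ∈ p.verts)

/-- A maximum-weight perfect 3-path packing. -/
def IsMaxPacking (w : Sym2 V → ℝ) (P : Finset (P3 V)) : Prop :=
  IsPacking P ∧ ∀ Q : Finset (P3 V), IsPacking Q → pw w Q ≤ pw w P

/-- A matching: a set of pairwise vertex-disjoint (non-loop) edges. -/
def IsMatching (M : Finset (Sym2 V)) : Prop :=
  (∀ e ∈ M, ¬ e.IsDiag) ∧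
  ∀ e ∈ M, ∀ f ∈ M, e ≠ f → ∀ v : V, v ∈ e → v ∉ f

/-- A maximum-weight matching among all matchings of size `k`. -/
def IsMaxMatchingOfSize (w : Sym2 V → ℝ) (k : ℕ) (M : Finset (Sym2 V)) : Prop :=
  IsMatching M ∧ M.card = k ∧
  ∀ M' : Finset (Sym2 V), IsMatching M' → M'.card = k → ew w M' ≤ ew w M

/-- `v ∈ V(M)` : vertex `v` is covered by the matching `M`. -/
def covered (M : Finset (Sym2 V)) (v : V) : Prop := ∃ e ∈ M, v ∈ e

/-- `e_u` : the edge of `M` containing `u` (junk value if there is none). -/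
noncomputable def eMatch (M : Finset (Sym2 V)) (u : V) : Sym2 V :=
  if h : ∃ e ∈ M, u ∈ e then h.choose else s(u, u)

/-- The cost `c` of an edge with respect to a matching `M`:
`c(uv) = w(uv) - min (w (e_u)) (w (e_v))` if both endpoints are covered by `M`,
and `c(uv) = w(uv)` otherwise. -/
noncomputable def cost (w : Sym2 V → ℝ) (M : Finset (Sym2 V)) : Sym2 V → ℝ :=
  Sym2.lift ⟨fun u v =>
    if covered M u ∧ covered M v then
      w s(u, v) - min (w (eMatch M u)) (w (eMatch M v))
    else w s(u, v), by
      intro u v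
      dsimp only
      by_cases h : covered M u ∧ covered M v
      · rw [if_pos h, if_pos (show covered M v ∧ covered M u from ⟨h.2, h.1⟩),
          Sym2.eq_swap, min_comm]
      · rw [if_neg h, if_neg (show ¬(covered M v ∧ covered M u) from fun h' => h ⟨h'.2, h'.1⟩),
          Sym2.eq_swap]⟩

/-- The total cost of a set of edges. -/
noncomputable def cw (w : Sym2 V → ℝ) (M F : Finset (Sym2 V)) : ℝ := ∑ e ∈ F, cost w M e

/-- The number of vertices of the 3-path `p` covered by `M`. -/
noncomputable def kcnt (M : Finset (Sym2 V)) (p : P3 V) : ℕ :=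
  (p.verts.filter fun v => covered M v).card

/-- Exactly one of the two edges of `p` lies in `M`. -/
def exOne (M : Finset (Sym2 V)) (p : P3 V) : Prop :=
  (s(p.x, p.y) ∈ M ∧ s(p.y, p.z) ∉ M) ∨ (s(p.x, p.y) ∉ M ∧ s(p.y, p.z) ∈ M)

def cls1 (M : Finset (Sym2 V)) (p : P3 V) : Prop := kcnt M p = 0
def cls2 (M : Finset (Sym2 V)) (p : P3 V) : Prop := kcnt M p = 1 ∧ ¬ covered M p.y
def cls3 (M : Finset (Sym2 V)) (p : P3 V) : Prop := kcnt M p = 1 ∧ covered M p.y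
def cls4 (M : Finset (Sym2 V)) (p : P3 V) : Prop := kcnt M p = 2 ∧ ¬ covered M p.y
def cls5 (M : Finset (Sym2 V)) (p : P3 V) : Prop := kcnt M p = 2 ∧ covered M p.y ∧ exOne M p
def cls6 (M : Finset (Sym2 V)) (p : P3 V) : Prop :=
  kcnt M p = 2 ∧ covered M p.y ∧ s(p.x, p.y) ∉ M ∧ s(p.y, p.z) ∉ M
def cls7 (M : Finset (Sym2 V)) (p : P3 V) : Prop := kcnt M p = 3 ∧ exOne M p
def cls8 (M : Finset (Sym2 V)) (p : P3 V) : Prop :=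
  kcnt M p = 3 ∧ s(p.x, p.y) ∉ M ∧ s(p.y, p.z) ∉ M

/-- The subset of a set of 3-paths satisfying a predicate. -/
noncomputable def psel (P : Finset (P3 V)) (c : P3 V → Prop) : Finset (P3 V) := P.filter c

/-- The set of all edges of the 3-paths in `S`. -/
def Esub (S : Finset (P3 V)) : Finset (Sym2 V) := S.biUnion P3.edges

/-- The heaviest edge of a 3-path (the edge `xy` in case of a tie). -/
noncomputable def heavy (w : Sym2 V → ℝ) (p : P3 V) : Sym2 V :=
  if w s(p.y, p.z) ≤ w s(p.x, p.y) then s(p.x, p.y) else s(p.y, p.z)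

noncomputable def X1 (w : Sym2 V → ℝ) (P : Finset (P3 V)) (M : Finset (Sym2 V)) :
    Finset (Sym2 V) := (psel P (cls1 M)).image (heavy w)
noncomputable def X2 (P : Finset (P3 V)) (M : Finset (Sym2 V)) : Finset (Sym2 V) :=
  (psel P (cls2 M)).image fun p => if covered M p.x then s(p.x, p.y) else s(p.y, p.z)
noncomputable def X3 (w : Sym2 V → ℝ) (P : Finset (P3 V)) (M : Finset (Sym2 V)) :
    Finset (Sym2 V) := (psel P (cls3 M)).image (heavy w)
noncomputable def X4 (w : Sym2 V → ℝ) (P : Finset (P3 V)) (M : Finset (Sym2 V)) :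
    Finset (Sym2 V) := (psel P (cls4 M)).image (heavy w)
noncomputable def X5 (P : Finset (P3 V)) (M : Finset (Sym2 V)) : Finset (Sym2 V) :=
  (psel P (cls5 M)).image fun p => if s(p.x, p.y) ∈ M then s(p.y, p.z) else s(p.x, p.y)
noncomputable def X6 (P : Finset (P3 V)) (M : Finset (Sym2 V)) : Finset (Sym2 V) :=
  (psel P (cls6 M)).image fun p => if covered M p.x then s(p.y, p.z) else s(p.x, p.y)
noncomputable def X7 (P : Finset (P3 V)) (M : Finset (Sym2 V)) : Finset (Sym2 V) :=
  (psel P (cls7 M)).image fun p => if s(p.x, p.y) ∈ M then s(p.y, p.z) else s(p.x, p.y)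
noncomputable def X8 (w : Sym2 V → ℝ) (P : Finset (P3 V)) (M : Finset (Sym2 V)) :
    Finset (Sym2 V) := (psel P (cls8 M)).image (heavy w)

noncomputable def Y1 (w : Sym2 V → ℝ) (P : Finset (P3 V)) (M : Finset (Sym2 V)) :
    Finset (Sym2 V) := Esub (psel P (cls1 M)) \ X1 w P M
noncomputable def Y2 (P : Finset (P3 V)) (M : Finset (Sym2 V)) : Finset (Sym2 V) :=
  Esub (psel P (cls2 M)) \ X2 P M
noncomputable def Y3 (w : Sym2 V → ℝ) (P : Finset (P3 V)) (M : Finset (Sym2 V)) :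
    Finset (Sym2 V) := Esub (psel P (cls3 M)) \ X3 w P M
noncomputable def Y4 (w : Sym2 V → ℝ) (P : Finset (P3 V)) (M : Finset (Sym2 V)) :
    Finset (Sym2 V) := Esub (psel P (cls4 M)) \ X4 w P M
noncomputable def Y5 (P : Finset (P3 V)) (M : Finset (Sym2 V)) : Finset (Sym2 V) :=
  Esub (psel P (cls5 M)) \ X5 P M
noncomputable def Y6 (P : Finset (P3 V)) (M : Finset (Sym2 V)) : Finset (Sym2 V) :=
  Esub (psel P (cls6 M)) \ X6 P M
noncomputable def Y7 (P : Finset (P3 V)) (M : Finset (Sym2 V)) : Finset (Sym2 V) :=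
  Esub (psel P (cls7 M)) \ X7 P M
noncomputable def Y8 (w : Sym2 V → ℝ) (P : Finset (P3 V)) (M : Finset (Sym2 V)) :
    Finset (Sym2 V) := Esub (psel P (cls8 M)) \ X8 w P M

/-- An edge is a middle edge (w.r.t. `M`) if exactly one of its endpoints lies in `V(M)`. -/
def isMiddle (M : Finset (Sym2 V)) (e : Sym2 V) : Prop :=
  ∃ u v : V, e = s(u, v) ∧ covered M u ∧ ¬ covered M v

/-- Two edges share a vertex. -/
def shares (e f : Sym2 V) : Prop := ∃ v, v ∈ e ∧ v ∈ f

/-- `g` is a middle edge of some 3-path in `S`. -/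
def middleIn (M : Finset (Sym2 V)) (S : Finset (P3 V)) (g : Sym2 V) : Prop :=
  (∃ p ∈ S, g ∈ p.edges) ∧ isMiddle M g

/-- The 3-paths of `P` lying in classes 2, 3 or 4. -/
noncomputable def P234 (P : Finset (P3 V)) (M : Finset (Sym2 V)) : Finset (P3 V) :=
  psel P fun p => cls2 M p ∨ cls3 M p ∨ cls4 M p

/-- `M_1`: edges of `M` sharing a vertex with at least one middle edge of a 3-path of `P*_6`. -/
noncomputable def Mset1 (P : Finset (P3 V)) (M : Finset (Sym2 V)) : Finset (Sym2 V) :=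
  M.filter fun f => ∃ g, middleIn M (psel P (cls6 M)) g ∧ shares f g

/-- `M_2`: edges of `M` sharing a vertex with at least one middle edge, all middle edges met
belonging to 3-paths of `P*_2 ∪ P*_3 ∪ P*_4`. -/
noncomputable def Mset2 (P : Finset (P3 V)) (M : Finset (Sym2 V)) : Finset (Sym2 V) :=
  M.filter fun f =>
    (∃ g, middleIn M P g ∧ shares f g) ∧
    ∀ g, middleIn M P g → shares f g → middleIn M (P234 P M) g

/-- `M_3 = M ∩ E(P*_7)`. -/
noncomputable def Mset3 (P : Finset (P3 V)) (M : Finset (Sym2 V)) : Finset (Sym2 V) :=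
  M ∩ Esub (psel P (cls7 M))

/-- `M_4 = M ∩ E(P*_5)`. -/
noncomputable def Mset4 (P : Finset (P3 V)) (M : Finset (Sym2 V)) : Finset (Sym2 V) :=
  M ∩ Esub (psel P (cls5 M))

/-- The middle edges of 3-paths of `P*_6`. -/
noncomputable def mid6 (P : Finset (P3 V)) (M : Finset (Sym2 V)) : Finset (Sym2 V) :=
  (Esub (psel P (cls6 M))).filter (isMiddle M)

/-- `M'_1`: edges of `M_1` meeting exactly one middle edge of a 3-path of `P*_6` and
no middle edge of a 3-path of `P*_2 ∪ P*_3 ∪ P*_4`. -/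
noncomputable def Mset1' (P : Finset (P3 V)) (M : Finset (Sym2 V)) : Finset (Sym2 V) :=
  (Mset1 P M).filter fun f =>
    ((mid6 P M).filter fun g => shares f g).card = 1 ∧
    ∀ g, middleIn M (P234 P M) g → ¬ shares f g

/-- `M''_1`: edges of `M_1` meeting two middle edges of 3-paths of `P*_6`. -/
noncomputable def Mset1'' (P : Finset (P3 V)) (M : Finset (Sym2 V)) : Finset (Sym2 V) :=
  (Mset1 P M).filter fun f => ((mid6 P M).filter fun g => shares f g).card = 2

/-- `M'''_1`: edges of `M_1` meeting exactly one middle edge of a 3-path of `P*_6` and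
at least one middle edge of a 3-path of `P*_2 ∪ P*_3 ∪ P*_4`. -/
noncomputable def Mset1''' (P : Finset (P3 V)) (M : Finset (Sym2 V)) : Finset (Sym2 V) :=
  (Mset1 P M).filter fun f =>
    ((mid6 P M).filter fun g => shares f g).card = 1 ∧
    ∃ g, middleIn M (P234 P M) g ∧ shares f g

/-- Assumption on `P*`: for every 3-path `xyz ∈ P*` with `y ∉ V(M)` and `x, z ∈ V(M)`,
the vertices `x` and `z` lie in two distinct edges of `M`. -/
def Ass (P : Finset (P3 V)) (M : Finset (Sym2 V)) : Prop :=
  ∀ p ∈ P, ¬ covered M p.y → covered M p.x → covered M p.z →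
    ∃ e ∈ M, ∃ f ∈ M, p.x ∈ e ∧ p.z ∈ f ∧ e ≠ f

/-- An admissible edge w.r.t. `M`: either both endpoints are in `V(M)` and lie in two distinct
edges of `M`, or exactly one endpoint is in `V(M)`. -/
def goodEdge (M : Finset (Sym2 V)) (e : Sym2 V) : Prop :=
  (∃ u v : V, e = s(u, v) ∧ covered M u ∧ covered M v ∧ ∀ f ∈ M, ¬(u ∈ f ∧ v ∈ f)) ∨
  (∃ u v : V, e = s(u, v) ∧ covered M u ∧ ¬ covered M v)


/-!
Let `F` be a set of edges that becomes a matching when the edges of `M` are contracted. Since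
`n = 3 |M|`, every edge of `M` can be given a vertex outside `V(M)`, and along `F` this can be done
in such a way that the packing gains the cost of `F`: its weight is at least `w(M) + c(F)`.

Four such sets `F` are averaged. The edges of the 3-paths of classes 6 and 8 split into two sets,
each of which forms paths together with `M`; an edge of each 3-path of classes 2, 3, 4 and 7 is a
dead end and may be added to both. The edges outside `M` on a path, taken alternately, form two
contracted matchings, so each of the two sets splits again. An edge of each 3-path of class 5 fits
all four. Hence the coefficients 1 for class 5, 1/2 for the dead ends, and 1/4 for classes 6 and 8.

Passing from costs back to weights takes at most 1/6 of an edge of `M` at each of its endpoints,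
1/12 at the middle vertices of class 6 and nothing on classes 2, 3, 4 and 5. What is left is at
least the coefficient of the edge in the bound, except that the terms for `M_3` and `Y_7` need not
be earned at all because `M_3 ⊆ Y_7`.
-/

section Matchings

variable {α : Type*} {M N : Finset (Sym2 α)} {u v t : α} {e f : Sym2 α}

theorem covered_of_mk_mem_left (h : s(u, v) ∈ M) : covered M u :=
  ⟨_, h, Sym2.mem_mk_left u v⟩

theorem covered_of_mk_mem_right (h : s(u, v) ∈ M) : covered M v :=
  ⟨_, h, Sym2.mem_mk_right u v⟩

theorem covered.exists_mk_mem (h : covered M v) : ∃ t, s(v, t) ∈ M := by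
  obtain ⟨e, he, hv⟩ := h
  obtain ⟨t, rfl⟩ := hv
  exact ⟨t, he⟩

theorem covered.mono (h : covered M v) (hMN : M ⊆ N) : covered N v := by
  obtain ⟨e, he, hv⟩ := h
  exact ⟨e, hMN he, hv⟩

theorem IsMatching.mono (hM : IsMatching M) (h : N ⊆ M) : IsMatching N :=
  ⟨fun e he => hM.1 e (h he), fun e he f hf => hM.2 e (h he) f (h hf)⟩

theorem IsMatching.eq_of_mem (hM : IsMatching M) (he : e ∈ M) (hf : f ∈ M) (hve : v ∈ e)
    (hvf : v ∈ f) : e = f :=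
  by_contra fun h => hM.2 e he f hf h v hve hvf

theorem IsMatching.ne_of_mk_mem (hM : IsMatching M) (h : s(u, v) ∈ M) : u ≠ v :=
  fun huv => hM.1 _ h (Sym2.mk_isDiag_iff.2 huv)

theorem IsMatching.eq_of_mk_mem (hM : IsMatching M) (hv : s(u, v) ∈ M) (ht : s(u, t) ∈ M) :
    v = t :=
  Sym2.congr_right.1 (hM.eq_of_mem hv ht (Sym2.mem_mk_left u v) (Sym2.mem_mk_left u t))

theorem goodEdge_mk_iff :
    goodEdge M s(u, v) ↔ u ≠ v ∧ s(u, v) ∉ M ∧ (covered M u ∨ covered M v) := by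
  constructor
  · intro h
    obtain ⟨a, b, hab, hne, hmem, hcov⟩ :
        ∃ a b, s(u, v) = s(a, b) ∧ a ≠ b ∧ s(a, b) ∉ M ∧ covered M a := by
      rcases h with ⟨a, b, hab, ha, -, hf⟩ | ⟨a, b, hab, ha, hb⟩
      · refine ⟨a, b, hab, ?_, fun h => hf _ h ⟨Sym2.mem_mk_left a b, Sym2.mem_mk_right a b⟩, ha⟩
        rintro rfl
        obtain ⟨f, hfM, haf⟩ := ha
        exact hf f hfM ⟨haf, haf⟩
      · exact ⟨a, b, hab, fun h => hb (h ▸ ha), fun h => hb (covered_of_mk_mem_right h), ha⟩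
    rcases Sym2.eq_iff.1 hab with ⟨rfl, rfl⟩ | ⟨rfl, rfl⟩
    exacts [⟨hne, hmem, .inl hcov⟩, ⟨hne.symm, Sym2.eq_swap ▸ hmem, .inr hcov⟩]
  · rintro ⟨huv, hnot, hcov⟩
    by_cases hu : covered M u
    · by_cases hv : covered M v
      · refine .inl ⟨u, v, rfl, hu, hv, fun f hf h => hnot ?_⟩
        rwa [← (Sym2.mem_and_mem_iff huv).1 h]
      · exact .inr ⟨u, v, rfl, hu, hv⟩
    · exact .inr ⟨v, u, Sym2.eq_swap, hcov.resolve_left hu, hu⟩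

theorem goodEdge.mk_ne_mk {a b : α} (h : goodEdge M s(u, v)) (hua : s(u, a) ∈ M) :
    s(u, a) ≠ s(v, b) := by
  obtain ⟨huv, hnot, -⟩ := goodEdge_mk_iff.1 h
  intro heq
  exact hnot ((Sym2.mem_and_mem_iff huv).1
    ⟨Sym2.mem_mk_left u a, heq ▸ Sym2.mem_mk_left v b⟩ ▸ hua)

section Cost

variable [DecidableEq α]

theorem mem_eMatch (M : Finset (Sym2 α)) (v : α) : v ∈ eMatch M v := by
  unfold eMatch
  split_ifs with h
  · exact h.choose_spec.2
  · exact Sym2.mem_mk_left v v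

theorem covered.eMatch_mem (h : covered M v) : eMatch M v ∈ M := by
  unfold eMatch
  rw [dif_pos (show ∃ e ∈ M, v ∈ e from h)]
  exact (show ∃ e ∈ M, v ∈ e from h).choose_spec.1

theorem eMatch_of_not_covered (h : ¬ covered M v) : eMatch M v = s(v, v) := dif_neg h

theorem IsMatching.eMatch_eq (hM : IsMatching M) (hf : f ∈ M) (hv : v ∈ f) : eMatch M v = f :=
  hM.eq_of_mem (covered.eMatch_mem ⟨f, hf, hv⟩) hf (mem_eMatch M v) hv

theorem cost_of_covered (w : Sym2 α → ℝ) (hu : covered M u) (hv : covered M v) :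
    cost w M s(u, v) = w s(u, v) - min (w (eMatch M u)) (w (eMatch M v)) :=
  if_pos ⟨hu, hv⟩

theorem cost_of_not_covered (w : Sym2 α → ℝ) (hv : v ∈ e) (h : ¬ covered M v) :
    cost w M e = w e := by
  obtain ⟨u, rfl⟩ := hv
  exact if_neg fun h' => h h'.1

theorem covered_sdiff_iff (h : ¬ covered N v) : covered (M \ N) v ↔ covered M v := by
  refine exists_congr fun e => ?_
  rw [Finset.mem_sdiff, and_assoc]
  exact and_congr_right fun _ => and_iff_right_of_imp fun hv he => h ⟨e, he, hv⟩

theorem IsMatching.eMatch_sdiff (hM : IsMatching M) (h : ¬ covered N v) :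
    eMatch (M \ N) v = eMatch M v := by
  by_cases hv : covered M v
  · refine (hM.mono Finset.sdiff_subset).eMatch_eq (Finset.mem_sdiff.2 ⟨hv.eMatch_mem, ?_⟩)
      (mem_eMatch M v)
    exact fun hN => h ⟨_, hN, mem_eMatch M v⟩
  · rw [eMatch_of_not_covered hv, eMatch_of_not_covered (mt (covered_sdiff_iff h).1 hv)]

theorem IsMatching.cost_sdiff (hM : IsMatching M) (w : Sym2 α → ℝ)
    (h : ∀ v ∈ e, ¬ covered N v) : cost w (M \ N) e = cost w M e := by
  induction e with | _ u v
  have hu := h u (Sym2.mem_mk_left u v)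
  have hv := h v (Sym2.mem_mk_right u v)
  simp only [cost, Sym2.lift_mk, covered_sdiff_iff hu, covered_sdiff_iff hv, hM.eMatch_sdiff hu,
    hM.eMatch_sdiff hv]

theorem goodEdge.sdiff (he : goodEdge M e) (h : ∀ v ∈ e, ¬ covered N v) :
    goodEdge (M \ N) e := by
  induction e with | _ u v
  rw [goodEdge_mk_iff] at he
  rw [goodEdge_mk_iff, covered_sdiff_iff (h u (Sym2.mem_mk_left u v)),
    covered_sdiff_iff (h v (Sym2.mem_mk_right u v))]
  exact ⟨he.1, fun hmem => he.2.1 (Finset.sdiff_subset hmem), he.2.2⟩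

end Cost

section VertexSet

variable [DecidableEq α]

/-- The set `V(M)` of vertices covered by `M`, as a finset. -/
def vertexSet (M : Finset (Sym2 α)) : Finset α := M.biUnion Sym2.toFinset

theorem mem_vertexSet : v ∈ vertexSet M ↔ covered M v := by
  simp only [vertexSet, Finset.mem_biUnion, Sym2.mem_toFinset, covered]

theorem IsMatching.pairwiseDisjoint_toFinset (hM : IsMatching M) :
    (M : Set (Sym2 α)).PairwiseDisjoint Sym2.toFinset := fun e he f hf hef =>
  Finset.disjoint_left.2 fun v hve hvf =>
    hM.2 e he f hf hef v (Sym2.mem_toFinset.1 hve) (Sym2.mem_toFinset.1 hvf)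

theorem IsMatching.sum_vertexSet {β : Type*} [AddCommMonoid β] (hM : IsMatching M) (h : α → β) :
    ∑ v ∈ vertexSet M, h v = ∑ f ∈ M, ∑ v ∈ f.toFinset, h v :=
  Finset.sum_biUnion hM.pairwiseDisjoint_toFinset

theorem IsMatching.card_vertexSet (hM : IsMatching M) : (vertexSet M).card = M.card * 2 := by
  rw [vertexSet, Finset.card_biUnion hM.pairwiseDisjoint_toFinset]
  exact Finset.sum_const_nat fun e he => Sym2.card_toFinset_of_not_isDiag e (hM.1 e he)

theorem vertexSet_union (M N : Finset (Sym2 α)) :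
    vertexSet (M ∪ N) = vertexSet M ∪ vertexSet N :=
  Finset.union_biUnion

theorem IsMatching.disjoint_vertexSet_sdiff (hM : IsMatching M) (h : N ⊆ M) :
    Disjoint (vertexSet N) (vertexSet (M \ N)) := by
  refine Finset.disjoint_left.2 fun v hN hMN => ?_
  obtain ⟨e, he, hve⟩ := mem_vertexSet.1 hN
  obtain ⟨f, hf, hvf⟩ := mem_vertexSet.1 hMN
  obtain ⟨hfM, hfN⟩ := Finset.mem_sdiff.1 hf
  exact hfN (hM.eq_of_mem (h he) hfM hve hvf ▸ he)

theorem vertexSet_singleton (u v : α) : vertexSet {s(u, v)} = {u, v} := by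
  simp only [vertexSet, Finset.singleton_biUnion, Sym2.toFinset_mk_eq]

end VertexSet

end Matchings

section ThreePaths

variable {α : Type*} {S : Finset (P3 α)} {p q : P3 α} {e : Sym2 α} {v : α}

theorem P3.edges_ne (p : P3 α) : s(p.x, p.y) ≠ s(p.y, p.z) := by
  intro h
  have hx := h ▸ Sym2.mem_mk_left p.x p.y
  rcases Sym2.mem_iff.1 hx with hx | hx
  exacts [p.hxy hx, p.hxz hx]

variable [DecidableEq α]

theorem P3.mem_verts : v ∈ p.verts ↔ v = p.x ∨ v = p.y ∨ v = p.z := by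
  simp only [P3.verts, Finset.mem_insert, Finset.mem_singleton]

theorem P3.card_verts (p : P3 α) : p.verts.card = 3 :=
  Finset.card_eq_three.2 ⟨_, _, _, p.hxy, p.hxz, p.hyz, rfl⟩

theorem P3.mem_edges : e ∈ p.edges ↔ e = s(p.x, p.y) ∨ e = s(p.y, p.z) := by
  rw [P3.edges, Finset.mem_insert, Finset.mem_singleton]

theorem P3.mem_verts_of_mem_edges (he : e ∈ p.edges) (hv : v ∈ e) : v ∈ p.verts := by
  rw [P3.mem_verts]
  rcases P3.mem_edges.1 he with rfl | rfl <;> rw [Sym2.mem_iff] at hv <;> tauto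

theorem P3.eq_y_of_mem_of_mem {f : Sym2 α} (he : e ∈ p.edges) (hf : f ∈ p.edges) (hef : e ≠ f)
    (hve : v ∈ e) (hvf : v ∈ f) : v = p.y := by
  have hx : p.x ∉ s(p.y, p.z) := by simp [p.hxy, p.hxz]
  have hz : p.z ∉ s(p.x, p.y) := by simp [p.hxz.symm, p.hyz.symm]
  rcases P3.mem_verts.1 (P3.mem_verts_of_mem_edges he hve) with rfl | rfl | rfl
  · have h := P3.mem_edges.1 he
    have h' := P3.mem_edges.1 hf
    grind
  · rfl
  · have h := P3.mem_edges.1 he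
    have h' := P3.mem_edges.1 hf
    grind

theorem mem_Esub : e ∈ Esub S ↔ ∃ p ∈ S, e ∈ p.edges := Finset.mem_biUnion

theorem covered_Esub : covered (Esub S) v ↔ ∃ p ∈ S, v ∈ p.verts := by
  constructor
  · rintro ⟨e, he, hv⟩
    obtain ⟨p, hp, he⟩ := mem_Esub.1 he
    exact ⟨p, hp, P3.mem_verts_of_mem_edges he hv⟩
  · rintro ⟨p, hp, hv⟩
    have hxy : s(p.x, p.y) ∈ Esub S := mem_Esub.2 ⟨p, hp, P3.mem_edges.2 (.inl rfl)⟩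
    have hyz : s(p.y, p.z) ∈ Esub S := mem_Esub.2 ⟨p, hp, P3.mem_edges.2 (.inr rfl)⟩
    rcases P3.mem_verts.1 hv with rfl | rfl | rfl
    exacts [covered_of_mk_mem_left hxy, covered_of_mk_mem_right hxy, covered_of_mk_mem_right hyz]

theorem eq_of_mem_verts (hS : (S : Set (P3 α)).PairwiseDisjoint P3.verts) (hp : p ∈ S)
    (hq : q ∈ S) (hvp : v ∈ p.verts) (hvq : v ∈ q.verts) : p = q :=
  hS.elim_finset hp hq v hvp hvq

theorem not_covered_Esub_of_insert (hS : (insert p S : Set (P3 α)).PairwiseDisjoint P3.verts)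
    (hp : p ∉ S) (hv : v ∈ p.verts) : ¬ covered (Esub S) v := by
  rw [covered_Esub]
  rintro ⟨q, hq, hvq⟩
  exact hp (hS.elim_finset (Set.mem_insert p S) (Set.mem_insert_of_mem p hq) v hv hvq ▸ hq)

end ThreePaths

section HasPacking

variable {α : Type*} [DecidableEq α] {r r' : ℝ} {S T : Finset α} {w : Sym2 α → ℝ}

/-- The vertex set `S` can be partitioned into 3-paths of total weight at least `r`. -/
def HasPacking (w : Sym2 α → ℝ) (S : Finset α) (r : ℝ) : Prop :=
  ∃ P : Finset (P3 α), (P : Set (P3 α)).PairwiseDisjoint P3.verts ∧ P.biUnion P3.verts = S ∧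
    r ≤ pw w P

theorem HasPacking.empty (w : Sym2 α → ℝ) : HasPacking w ∅ 0 :=
  ⟨∅, by simp, by simp, by simp [pw]⟩

theorem HasPacking.path (w : Sym2 α → ℝ) (p : P3 α) : HasPacking w p.verts (p.wt w) :=
  ⟨{p}, by simp, by simp, by simp [pw]⟩

theorem HasPacking.mono (h : HasPacking w S r) (hr : r' ≤ r) : HasPacking w S r' := by
  obtain ⟨P, hdisj, hS, hle⟩ := h
  exact ⟨P, hdisj, hS, hr.trans hle⟩

theorem HasPacking.union (hS : HasPacking w S r) (hT : HasPacking w T r')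
    (hST : Disjoint S T) : HasPacking w (S ∪ T) (r + r') := by
  obtain ⟨P, hP, rfl, hr⟩ := hS
  obtain ⟨Q, hQ, rfl, hr'⟩ := hT
  have hPQ : ∀ p ∈ P, ∀ q ∈ Q, Disjoint p.verts q.verts := fun p hp q hq =>
    hST.mono (Finset.subset_biUnion_of_mem _ hp) (Finset.subset_biUnion_of_mem _ hq)
  have hdisj : Disjoint P Q := by
    refine Finset.disjoint_left.2 fun p hp hq => ?_
    exact Finset.disjoint_left.1 (hPQ p hp p hq) (P3.mem_verts.2 (.inl rfl))
      (P3.mem_verts.2 (.inl rfl))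
  refine ⟨P ∪ Q, ?_, Finset.union_biUnion, ?_⟩
  · rw [Finset.coe_union, Set.pairwiseDisjoint_union]
    exact ⟨hP, hQ, fun p hp q hq _ => hPQ p hp q hq⟩
  · rw [pw, Finset.sum_union hdisj]
    exact add_le_add hr hr'

theorem HasPacking.exists_isPacking [Fintype α] (h : HasPacking w Finset.univ r) :
    ∃ P : Finset (P3 α), IsPacking P ∧ r ≤ pw w P := by
  obtain ⟨P, hdisj, huniv, hr⟩ := h
  refine ⟨P, ⟨?_, fun p hp q hq hpq => hdisj hp hq hpq, fun v => ?_⟩, hr⟩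
  · rw [← Finset.card_univ, ← huniv, Finset.card_biUnion hdisj,
      Finset.sum_const_nat fun p _ => p.card_verts, Nat.mul_div_cancel _ three_pos]
  · rw [← Finset.mem_biUnion, huniv]
    exact Finset.mem_univ v

end HasPacking

section ContractedMatching

variable {α : Type*} {M N F F' : Finset (Sym2 α)} {U : Finset α} {e f g : Sym2 α} {u v a b t : α}

/-- `F` becomes a matching of non-loop edges, none of them outside `V(M)`, when every edge of `M`
is contracted to a vertex. -/
def IsContractedMatching (M F : Finset (Sym2 α)) : Prop :=
  (∀ e ∈ F, goodEdge M e) ∧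
    ∀ e ∈ F, ∀ f ∈ F, e ≠ f → ∀ u ∈ e, ∀ v ∈ f, u ≠ v ∧ s(u, v) ∉ M

theorem IsContractedMatching.not_covered_singleton (hF : IsContractedMatching M F)
    (he : e ∈ F) (hf : f ∈ F) (hne : f ≠ e) (hu : u ∈ e) (hg : g ∈ M) (hug : u ∈ g) (hv : v ∈ f) :
    ¬ covered {g} v := by
  rintro ⟨g', hg', hvg⟩
  obtain rfl := Finset.mem_singleton.1 hg'
  obtain ⟨hne', hmem⟩ := hF.2 e he f hf hne.symm u hu v hv
  exact hmem ((Sym2.mem_and_mem_iff hne').1 ⟨hug, hvg⟩ ▸ hg)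

variable [DecidableEq α] {w : Sym2 α → ℝ}

theorem IsContractedMatching.sdiff (hF : IsContractedMatching M F)
    (hF' : F' ⊆ F) (h : ∀ e ∈ F', ∀ v ∈ e, ¬ covered N v) : IsContractedMatching (M \ N) F' :=
  ⟨fun e he => (hF.1 e (hF' he)).sdiff (h e he), fun e he f hf hef u hu v hv =>
    (hF.2 e (hF' he) f (hF' hf) hef u hu v hv).imp_right
      fun hmem hsdiff => hmem (Finset.sdiff_subset hsdiff)⟩

/-- One step of the packing recursion: the edges `N` of `M` and the vertices `T` of `U` can be
packed so as to realise the weight of `N` and the cost of `F \ F'`, and `F'` avoids them. -/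
structure IsRemovable (w : Sym2 α → ℝ) (M : Finset (Sym2 α)) (U : Finset α) (F N : Finset (Sym2 α))
    (T : Finset α) (F' : Finset (Sym2 α)) : Prop where
  subset_left : N ⊆ M
  nonempty : N.Nonempty
  subset_right : T ⊆ U
  card_eq : T.card = N.card
  subset : F' ⊆ F
  not_covered : ∀ e ∈ F', ∀ v ∈ e, ¬ covered N v
  not_mem : ∀ e ∈ F', ∀ v ∈ e, v ∉ T
  hasPacking : HasPacking w (vertexSet N ∪ T) (ew w N + cw w M (F \ F'))

theorem IsRemovable.hasPacking_union {T : Finset α} (h : IsRemovable w M U F N T F')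
    (hM : IsMatching M) (hMU : Disjoint (vertexSet M) U)
    (hrest : HasPacking w (vertexSet (M \ N) ∪ (U \ T)) (ew w (M \ N) + cw w (M \ N) F')) :
    HasPacking w (vertexSet M ∪ U) (ew w M + cw w M F) := by
  have hV : vertexSet M = vertexSet N ∪ vertexSet (M \ N) := by
    rw [← vertexSet_union, Finset.union_sdiff_of_subset h.subset_left]
  have hdisj : Disjoint (vertexSet N ∪ T) (vertexSet (M \ N) ∪ (U \ T)) := by
    rw [hV, Finset.disjoint_union_left] at hMU
    rw [Finset.disjoint_union_left, Finset.disjoint_union_right, Finset.disjoint_union_right]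
    exact ⟨⟨hM.disjoint_vertexSet_sdiff h.subset_left, hMU.1.mono_right Finset.sdiff_subset⟩,
      (hMU.2.mono_right h.subset_right).symm, Finset.disjoint_sdiff⟩
  have hcost : cw w (M \ N) F' = cw w M F' :=
    Finset.sum_congr rfl fun e he => hM.cost_sdiff w (h.not_covered e he)
  convert h.hasPacking.union hrest hdisj using 1
  · rw [hV, Finset.union_union_union_comm, Finset.union_sdiff_of_subset h.subset_right]
  · rw [hcost, ew, ew, ew, ← Finset.sum_sdiff h.subset_left, cw, cw, cw,
      ← Finset.sum_sdiff h.subset]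
    ring

theorem hasPacking_triple (w : Sym2 α → ℝ) (hab : a ≠ u) (hub : u ≠ t) (hat : a ≠ t) :
    HasPacking w {a, u, t} (w s(u, a) + w s(u, t)) := by
  have h := HasPacking.path w ⟨a, u, t, hab, hub, hat⟩
  rwa [P3.wt, Sym2.eq_swap (a := a)] at h

theorem hasPacking_outer_edge (w : Sym2 α → ℝ) (hM : IsMatching M) (hua : s(u, a) ∈ M)
    (ht : ¬ covered M t) :
    HasPacking w (vertexSet {s(u, a)} ∪ {t}) (ew w {s(u, a)} + cw w M {s(u, t)}) := by
  convert hasPacking_triple w (a := a) (u := u) (t := t) ?_ ?_ ?_ using 1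
  · rw [vertexSet_singleton, Finset.pair_comm, Finset.insert_union]
    rfl
  · rw [ew, cw, Finset.sum_singleton, Finset.sum_singleton,
      cost_of_not_covered w (Sym2.mem_mk_right u t) ht]
  · exact (hM.ne_of_mk_mem hua).symm
  · rintro rfl
    exact ht (covered_of_mk_mem_left hua)
  · rintro rfl
    exact ht (covered_of_mk_mem_right hua)

theorem hasPacking_inner_edge (hM : IsMatching M) (hw : ∀ e, 0 ≤ w e) {t' : α}
    (hua : s(u, a) ∈ M) (hvb : s(v, b) ∈ M) (huv : goodEdge M s(u, v))
    (hle : w s(v, b) ≤ w s(u, a)) (ht : ¬ covered M t) (ht' : ¬ covered M t') (htt' : t ≠ t') :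
    HasPacking w (vertexSet {s(u, a), s(v, b)} ∪ {t, t'})
      (ew w {s(u, a), s(v, b)} + cw w M {s(u, v)}) := by
  have hne : s(u, a) ≠ s(v, b) := huv.mk_ne_mk hua
  have hdisj : ∀ r ∈ s(u, a), r ∉ s(v, b) := hM.2 _ hua _ hvb hne
  have hua_ne := hM.ne_of_mk_mem hua
  have hvb_ne := hM.ne_of_mk_mem hvb
  have hav : a ≠ v := fun h => hdisj a (Sym2.mem_mk_right u a) (h ▸ Sym2.mem_mk_left v b)
  have hub : u ≠ b := fun h => hdisj u (Sym2.mem_mk_left u a) (h ▸ Sym2.mem_mk_right v b)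
  have hab : a ≠ b := fun h => hdisj a (Sym2.mem_mk_right u a) (h ▸ Sym2.mem_mk_right v b)
  have hout : ∀ r, covered M r → r ≠ t ∧ r ≠ t' := fun r hr =>
    ⟨fun h => ht (h ▸ hr), fun h => ht' (h ▸ hr)⟩
  have hu := hout u (covered_of_mk_mem_left hua)
  have ha := hout a (covered_of_mk_mem_right hua)
  have hv := hout v (covered_of_mk_mem_left hvb)
  have hb := hout b (covered_of_mk_mem_right hvb)
  have hcost : cost w M s(u, v) = w s(u, v) - w s(v, b) := by
    rw [cost_of_covered w (covered_of_mk_mem_left hua) (covered_of_mk_mem_left hvb),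
      hM.eMatch_eq hua (Sym2.mem_mk_left u a), hM.eMatch_eq hvb (Sym2.mem_mk_left v b),
      min_eq_right hle]
  have hpath := (hasPacking_triple w hua_ne.symm (goodEdge_mk_iff.1 huv).1 hav).union
    (hasPacking_triple w (a := t) (u := b) (t := t') hb.1.symm hb.2 htt') (by
      simp only [Finset.disjoint_left, Finset.mem_insert, Finset.mem_singleton]; grind)
  convert hpath.mono (r' := ew w {s(u, a), s(v, b)} + cw w M {s(u, v)}) ?_ using 1
  · ext r
    simp only [vertexSet, Finset.biUnion_insert, Finset.singleton_biUnion, Sym2.toFinset_mk_eq,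
      Finset.mem_union, Finset.mem_insert, Finset.mem_singleton]
    tauto
  · rw [ew, cw, Finset.sum_pair hne, Finset.sum_singleton, hcost]
    linarith [hw s(b, t), hw s(b, t')]

theorem isRemovable_singleton (hw : ∀ e, 0 ≤ w e) (hM : IsMatching M) (hua : s(u, a) ∈ M)
    (htU : t ∈ U) (ht : ¬ covered M t) : IsRemovable w M U ∅ {s(u, a)} {t} ∅ where
  subset_left := Finset.singleton_subset_iff.2 hua
  nonempty := Finset.singleton_nonempty _
  subset_right := Finset.singleton_subset_iff.2 htU
  card_eq := rfl
  subset := Finset.Subset.rfl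
  not_covered := by simp
  not_mem := by simp
  hasPacking := by
    refine (hasPacking_outer_edge w hM hua ht).mono ?_
    rw [sdiff_self, cw, cw, Finset.bot_eq_empty, Finset.sum_empty, Finset.sum_singleton,
      cost_of_not_covered w (Sym2.mem_mk_right u t) ht]
    exact add_le_add_right (hw _) _

theorem IsContractedMatching.isRemovable_outer (hF : IsContractedMatching M F)
    (w : Sym2 α → ℝ) (hM : IsMatching M) (he : s(u, t) ∈ F) (hua : s(u, a) ∈ M) (htU : t ∈ U)
    (ht : ¬ covered M t) : IsRemovable w M U F {s(u, a)} {t} (F.erase s(u, t)) where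
  subset_left := Finset.singleton_subset_iff.2 hua
  nonempty := Finset.singleton_nonempty _
  subset_right := Finset.singleton_subset_iff.2 htU
  card_eq := rfl
  subset := Finset.erase_subset _ _
  not_covered f hf v hv :=
    hF.not_covered_singleton he (Finset.mem_of_mem_erase hf) (Finset.ne_of_mem_erase hf)
      (Sym2.mem_mk_left u t) hua (Sym2.mem_mk_left u a) hv
  not_mem f hf v hv hvt :=
    (hF.2 _ (Finset.mem_of_mem_erase hf) _ he (Finset.ne_of_mem_erase hf) v hv t
      (Sym2.mem_mk_right u t)).1 (Finset.mem_singleton.1 hvt)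
  hasPacking := by
    rw [Finset.sdiff_erase_self he]
    exact hasPacking_outer_edge w hM hua ht

theorem IsContractedMatching.isRemovable_inner (hF : IsContractedMatching M F)
    (hw : ∀ e, 0 ≤ w e) {t' : α} (hM : IsMatching M) (he : s(u, v) ∈ F) (hua : s(u, a) ∈ M)
    (hvb : s(v, b) ∈ M) (hle : w s(v, b) ≤ w s(u, a)) (hcov : ∀ f ∈ F, ∀ r ∈ f, covered M r)
    (htU : t ∈ U) (htU' : t' ∈ U) (htt' : t ≠ t') (hU : ∀ r ∈ U, ¬ covered M r) :
    IsRemovable w M U F {s(u, a), s(v, b)} {t, t'} (F.erase s(u, v)) where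
  subset_left := Finset.insert_subset hua (Finset.singleton_subset_iff.2 hvb)
  nonempty := Finset.insert_nonempty _ _
  subset_right := Finset.insert_subset htU (Finset.singleton_subset_iff.2 htU')
  card_eq := by
    rw [Finset.card_pair htt', Finset.card_pair ((hF.1 _ he).mk_ne_mk hua)]
  subset := Finset.erase_subset _ _
  not_covered f hf r hr := by
    obtain ⟨hne, hf⟩ := Finset.mem_erase.1 hf
    rintro ⟨g, hg, hrg⟩
    rcases Finset.mem_insert.1 hg with rfl | hg
    · exact hF.not_covered_singleton he hf hne (Sym2.mem_mk_left u v) hua (Sym2.mem_mk_left u a) hr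
        ⟨_, Finset.mem_singleton_self _, hrg⟩
    · exact hF.not_covered_singleton he hf hne (Sym2.mem_mk_right u v) hvb (Sym2.mem_mk_left v b)
        hr ⟨g, hg, hrg⟩
  not_mem f hf r hr hrT := by
    refine hU r ?_ (hcov f (Finset.mem_of_mem_erase hf) r hr)
    rcases Finset.mem_insert.1 hrT with rfl | hrT
    · exact htU
    · exact Finset.mem_singleton.1 hrT ▸ htU'
  hasPacking := by
    rw [Finset.sdiff_erase_self he]
    exact hasPacking_inner_edge hM hw hua hvb (hF.1 _ he) hle (hU t htU) (hU t' htU') htt'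

theorem IsContractedMatching.exists_isRemovable_of_covered (hF : IsContractedMatching M F)
    (hw : ∀ e, 0 ≤ w e) (hM : IsMatching M) (hU : ∀ r ∈ U, ¬ covered M r)
    (hcard : U.card = M.card) (hcov : ∀ f ∈ F, ∀ r ∈ f, covered M r) (he : e ∈ F) :
    ∃ N T F', IsRemovable w M U F N T F' := by
  induction e with | _ u v
  obtain ⟨a, hua⟩ := (hcov _ he u (Sym2.mem_mk_left u v)).exists_mk_mem
  obtain ⟨b, hvb⟩ := (hcov _ he v (Sym2.mem_mk_right u v)).exists_mk_mem
  obtain ⟨t, ht, t', ht', htt'⟩ : ∃ t ∈ U, ∃ t' ∈ U, t ≠ t' :=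
    Finset.one_lt_card.1 (hcard ▸ Finset.one_lt_card.2 ⟨_, hua, _, hvb, (hF.1 _ he).mk_ne_mk hua⟩)
  rcases le_total (w s(v, b)) (w s(u, a)) with hle | hle
  · exact ⟨_, _, _, hF.isRemovable_inner hw hM he hua hvb hle hcov ht ht' htt' hU⟩
  · exact ⟨_, _, _, hF.isRemovable_inner hw hM (Sym2.eq_swap ▸ he) hvb hua hle hcov ht ht' htt' hU⟩

theorem IsContractedMatching.exists_isRemovable (hF : IsContractedMatching M F)
    (hw : ∀ e, 0 ≤ w e) (hM : IsMatching M) (hU : ∀ r ∈ U, ¬ covered M r)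
    (hcard : U.card = M.card) (hFV : ∀ e ∈ F, ∀ v ∈ e, v ∈ vertexSet M ∪ U)
    (hne : M.Nonempty) : ∃ N T F', IsRemovable w M U F N T F' := by
  by_cases hcov : ∀ f ∈ F, ∀ r ∈ f, covered M r
  · obtain rfl | ⟨e, he⟩ := F.eq_empty_or_nonempty
    · obtain ⟨⟨u, a⟩, hua⟩ := hne
      obtain ⟨t, ht⟩ : U.Nonempty := Finset.card_pos.1 (hcard ▸ Finset.card_pos.2 ⟨_, hua⟩)
      exact ⟨_, _, _, isRemovable_singleton hw hM hua ht (hU t ht)⟩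
    · exact hF.exists_isRemovable_of_covered hw hM hU hcard hcov he
  · push Not at hcov
    obtain ⟨_, he, t, ⟨u, rfl⟩, ht⟩ := hcov
    rw [Sym2.eq_swap] at he
    obtain ⟨a, hua⟩ := ((goodEdge_mk_iff.1 (hF.1 _ he)).2.2.resolve_right ht).exists_mk_mem
    have htU : t ∈ U := (Finset.mem_union.1 (hFV _ he t (Sym2.mem_mk_right u t))).resolve_left
      (mt mem_vertexSet.1 ht)
    exact ⟨_, _, _, hF.isRemovable_outer w hM he hua htU ht⟩

theorem IsContractedMatching.hasPacking (hF : IsContractedMatching M F) (hw : ∀ e, 0 ≤ w e)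
    (hM : IsMatching M) (hMU : Disjoint (vertexSet M) U) (hcard : U.card = M.card)
    (hFV : ∀ e ∈ F, ∀ v ∈ e, v ∈ vertexSet M ∪ U) :
    HasPacking w (vertexSet M ∪ U) (ew w M + cw w M F) := by
  induction M using Finset.strongInduction generalizing U F with | _ M ih
  obtain rfl | hne := M.eq_empty_or_nonempty
  · obtain rfl : U = ∅ := Finset.card_eq_zero.1 hcard
    obtain rfl : F = ∅ := Finset.eq_empty_of_forall_notMem fun e he =>
      absurd (hFV e he _ e.out_fst_mem) (by simp [vertexSet])
    exact (HasPacking.empty w).mono (by simp [ew, cw])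
  have hU : ∀ t ∈ U, ¬ covered M t := fun t ht h =>
    Finset.disjoint_left.1 hMU (mem_vertexSet.2 h) ht
  obtain ⟨N, T, F', h⟩ := hF.exists_isRemovable hw hM hU hcard hFV hne
  refine h.hasPacking_union hM hMU (ih (M \ N) (Finset.sdiff_ssubset h.subset_left h.nonempty)
    (hF.sdiff h.subset h.not_covered) (hM.mono Finset.sdiff_subset) ?_ ?_ fun e he v hv => ?_)
  · refine (hMU.mono_left ?_).mono_right Finset.sdiff_subset
    exact Finset.biUnion_subset_biUnion_of_subset_left _ Finset.sdiff_subset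
  · rw [Finset.card_sdiff_of_subset h.subset_right, Finset.card_sdiff_of_subset h.subset_left,
      hcard, h.card_eq]
  · simpa only [Finset.mem_union, mem_vertexSet, Finset.mem_sdiff, h.not_mem e he v hv,
      not_false_eq_true, and_true, covered_sdiff_iff (h.not_covered e he v hv)]
      using hFV e (h.subset he) v hv

theorem IsContractedMatching.exists_isPacking [Fintype α] (hF : IsContractedMatching M F)
    (hw : ∀ e, 0 ≤ w e) (hM : IsMatching M) (hcard : Fintype.card α = 3 * M.card) :
    ∃ P : Finset (P3 α), IsPacking P ∧ ew w M + cw w M F ≤ pw w P := by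
  refine HasPacking.exists_isPacking ?_
  rw [← Finset.union_compl (vertexSet M)]
  refine hF.hasPacking hw hM disjoint_compl_right ?_ fun e _ v _ => ?_
  · rw [Finset.card_compl, hM.card_vertexSet, hcard]
    omega
  · rw [Finset.union_compl]
    exact Finset.mem_univ v

end ContractedMatching

section PathLabelling

variable {α : Type*} {M E : Finset (Sym2 α)} {g : α → Bool} {c : α → α} {u v : α}

/-- A certificate that the graph `M ∪ E`, for matchings `M` and `E`, is a disjoint union of paths:
`c` maps every vertex to a label of (a set of components containing) its component and `g` is a
2-colouring that alternates along `M` and is constant along `E`. A component has at most two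
vertices outside `V(E)`, and at most one if it has a vertex outside `V(M)`. -/
structure PathLabelling (M E : Finset (Sym2 α)) (g : α → Bool) (c : α → α) : Prop where
  isMatching : IsMatching E
  color_ne : ∀ u v, s(u, v) ∈ M → g u ≠ g v
  label_eq : ∀ u v, s(u, v) ∈ M → c u = c v
  pair_eq : ∀ u v, s(u, v) ∈ E → g u = g v ∧ c u = c v
  ends : ∀ a b d, ¬ covered E a → ¬ covered E b → ¬ covered E d → c a = c b → c b = c d →
    a = b ∨ b = d ∨ a = d
  tail : ∀ t a b, ¬ covered M t → ¬ covered E a → ¬ covered E b → c a = c t → c b = c t → a = b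

theorem IsMatching.exists_pathLabelling_empty (hM : IsMatching M) :
    ∃ g c, PathLabelling M ∅ g c := by
  have hmem : ∀ v, (eMatch M v).out.1 ∈ eMatch M v := fun v => Sym2.out_fst_mem _
  have hrep : ∀ v, eMatch M (eMatch M v).out.1 = eMatch M v := by
    intro v
    by_cases hv : covered M v
    · exact hM.eMatch_eq hv.eMatch_mem (hmem v)
    · have h := hmem v
      rw [eMatch_of_not_covered hv, Sym2.mem_iff, or_self] at h
      rw [eMatch_of_not_covered hv, h, eMatch_of_not_covered hv]
  have hinj : ∀ a b, (eMatch M a).out.1 = (eMatch M b).out.1 → a ∈ eMatch M b := by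
    intro a b h
    rw [← hrep b, ← h, hrep a]
    exact mem_eMatch M a
  have heq : ∀ u v, s(u, v) ∈ M → eMatch M u = s(u, v) ∧ eMatch M v = s(u, v) := fun u v h =>
    ⟨hM.eMatch_eq h (Sym2.mem_mk_left u v), hM.eMatch_eq h (Sym2.mem_mk_right u v)⟩
  refine ⟨fun v => decide (v = (eMatch M v).out.1), fun v => (eMatch M v).out.1,
    ⟨by simp, by simp⟩, fun u v h => ?_, fun u v h => ?_, by simp, ?_, ?_⟩
  · have hne := hM.ne_of_mk_mem h
    have hout := hmem u
    rw [(heq u v h).1, Sym2.mem_iff] at hout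
    rw [(heq u v h).1, (heq u v h).2]
    rcases hout with hout | hout <;> simp [hout, hne, hne.symm]
  · rw [(heq u v h).1, (heq u v h).2]
  · intro a b d _ _ _ hab hbd
    have ha := hinj a d (hab.trans hbd)
    have hb := hinj b d hbd
    obtain ⟨r, hr⟩ := mem_eMatch M d
    rw [hr, Sym2.mem_iff] at ha hb
    grind
  · intro t a b ht _ _ hat hbt
    have ha := hinj a t hat
    have hb := hinj b t hbt
    rw [eMatch_of_not_covered ht, Sym2.mem_iff, or_self] at ha hb
    rw [ha, hb]

theorem PathLabelling.label_ne (h : PathLabelling M E g c) (hM : IsMatching M)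
    (hu : ¬ covered E u) (hv : ¬ covered E v) (huv : u ≠ v)
    (hmate : ∀ t, s(u, t) ∈ M → t ≠ v ∧ ¬ covered E t) : c u ≠ c v := by
  intro hc
  by_cases hcov : covered M u
  · obtain ⟨t, ht⟩ := hcov.exists_mk_mem
    obtain ⟨htv, htE⟩ := hmate t ht
    rcases h.ends t u v htE hu hv (h.label_eq u t ht).symm hc with h' | h' | h'
    · exact hM.ne_of_mk_mem ht h'.symm
    · exact huv h'
    · exact htv h'
  · exact huv (h.tail u u v hcov hu hv rfl hc.symm)

/-- The edges of `E` both of whose endpoints have colour `b`. -/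
noncomputable def colorClass (E : Finset (Sym2 α)) (g : α → Bool) (b : Bool) : Finset (Sym2 α) :=
  E.filter fun e => ∀ v ∈ e, g v = b

theorem colorClass_subset (E : Finset (Sym2 α)) (g : α → Bool) (b : Bool) :
    colorClass E g b ⊆ E :=
  Finset.filter_subset _ _

theorem PathLabelling.isContractedMatching_colorClass (h : PathLabelling M E g c)
    (hgood : ∀ e ∈ E, goodEdge M e) (b : Bool) :
    IsContractedMatching M (colorClass E g b) := by
  refine ⟨fun e he => hgood e (Finset.mem_filter.1 he).1, fun e he f hf hef u hu v hv => ?_⟩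
  obtain ⟨he, hge⟩ := Finset.mem_filter.1 he
  obtain ⟨hf, hgf⟩ := Finset.mem_filter.1 hf
  refine ⟨?_, fun huv => h.color_ne u v huv ((hge u hu).trans (hgf v hv).symm)⟩
  rintro rfl
  exact h.isMatching.2 e he f hf hef u hu hv

theorem PathLabelling.cw_colorClass_add_cw_colorClass [DecidableEq α] (h : PathLabelling M E g c)
    (w : Sym2 α → ℝ) :
    cw w M (colorClass E g true) + cw w M (colorClass E g false) = cw w M E := by
  have hfalse : colorClass E g false = E.filter fun e => ¬ ∀ v ∈ e, g v = true := by
    refine Finset.filter_congr fun e he => ?_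
    induction e with | _ u v
    simp only [Sym2.ball, (h.pair_eq u v he).1, and_self, Bool.not_eq_true]
  rw [hfalse, colorClass]
  exact Finset.sum_filter_add_sum_filter_not E _ _

variable [DecidableEq α]

theorem IsMatching.insert (hE : IsMatching E) (hu : ¬ covered E u) (hv : ¬ covered E v)
    (huv : u ≠ v) : IsMatching (insert s(u, v) E) := by
  have hnew : ∀ e ∈ E, ∀ r ∈ e, r ∉ s(u, v) := by
    rintro e he r hr hmem
    rcases Sym2.mem_iff.1 hmem with rfl | rfl
    exacts [hu ⟨e, he, hr⟩, hv ⟨e, he, hr⟩]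
  refine ⟨fun e he => ?_, fun e he f hf hef r hre hrf => ?_⟩
  · rcases Finset.mem_insert.1 he with rfl | he
    exacts [mt Sym2.mk_isDiag_iff.1 huv, hE.1 e he]
  · rcases Finset.mem_insert.1 he with rfl | he <;> rcases Finset.mem_insert.1 hf with rfl | hf
    exacts [hef rfl, hnew f hf r hrf hre, hnew e he r hre hrf, hE.2 e he f hf hef r hre hrf]

theorem covered_insert {e : Sym2 α} {r : α} : covered (insert e E) r ↔ r ∈ e ∨ covered E r := by
  simp only [covered, Finset.exists_mem_insert]

theorem PathLabelling.exists_insert (h : PathLabelling M E g c) (hu : ¬ covered E u)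
    (hv : ¬ covered E v) (hc : c u ≠ c v) :
    ∃ g' c', PathLabelling M (insert s(u, v) E) g' c' := by
  have hfree : ∀ r, ¬ covered (insert s(u, v) E) r → (r ≠ u ∧ r ≠ v) ∧ ¬ covered E r := fun r hr =>
    by rwa [covered_insert, Sym2.mem_iff, not_or, not_or] at hr
  -- The component of `v` gets the label of `u`, and its colours are flipped if necessary.
  refine ⟨fun r => if g u = g v then g r else if c r = c v then !g r else g r,
    fun r => if c r = c v then c u else c r,
    h.isMatching.insert hu hv fun huv => hc (huv ▸ rfl), ?_, ?_, ?_, ?_, ?_⟩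
  · intro a b hab
    have hne := h.color_ne a b hab
    simp only [h.label_eq a b hab]
    split_ifs
    exacts [hne, mt Bool.not_inj hne, hne]
  · intro a b hab
    simp only [h.label_eq a b hab]
  · intro a b hab
    rcases Finset.mem_insert.1 hab with hab | hab
    · have hflip : g u ≠ g v → (!g v) = g u := by cases g u <;> cases g v <;> simp
      rcases Sym2.eq_iff.1 hab with ⟨rfl, rfl⟩ | ⟨rfl, rfl⟩ <;> grind
    · have hpair := h.pair_eq a b hab
      grind
  · intro a b d ha hb hd hab hbd
    obtain ⟨⟨hau, hav⟩, ha⟩ := hfree a ha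
    obtain ⟨⟨hbu, hbv⟩, hb⟩ := hfree b hb
    obtain ⟨⟨hdu, hdv⟩, hd⟩ := hfree d hd
    have hends := h.ends
    grind
  · intro t a b ht ha hb hat hbt
    obtain ⟨⟨hau, hav⟩, ha⟩ := hfree a ha
    obtain ⟨⟨hbu, hbv⟩, hb⟩ := hfree b hb
    have hends := h.ends
    have htail := h.tail
    grind

end PathLabelling

section Splittable

variable {α : Type*} [DecidableEq α] {M E E₁ E₂ : Finset (Sym2 α)} {g g₁ g₂ : α → Bool}
  {c c₁ c₂ : α → α} {S : Finset (P3 α)} {p : P3 α} {u v t : α}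

theorem PathLabelling.label_ne_or_label_ne (h₁ : PathLabelling M E₁ g₁ c₁)
    (h₂ : PathLabelling M E₂ g₂ c₂) (hM : IsMatching M) (hu : ¬ covered (E₁ ∪ E₂) u)
    (hv : ¬ covered (E₁ ∪ E₂) v) (huv : u ≠ v) (hmem : s(u, v) ∉ M)
    (hmate : ∀ t, s(u, t) ∈ M → ¬ (covered E₁ t ∧ covered E₂ t)) : c₁ u ≠ c₁ v ∨ c₂ u ≠ c₂ v := by
  have hleft := Finset.subset_union_left (s₁ := E₁) (s₂ := E₂)
  have hright := Finset.subset_union_right (s₁ := E₁) (s₂ := E₂)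
  by_cases h : ∀ t, s(u, t) ∈ M → ¬ covered E₁ t
  · exact .inl (h₁.label_ne hM (fun h => hu (h.mono hleft)) (fun h => hv (h.mono hleft)) huv
      fun t ht => ⟨fun h => hmem (h ▸ ht), h t ht⟩)
  · push Not at h
    obtain ⟨s, hs, hs₁⟩ := h
    refine .inr (h₂.label_ne hM (fun h => hu (h.mono hright)) (fun h => hv (h.mono hright)) huv
      fun t ht => ⟨fun h => hmem (h ▸ ht), fun ht₂ => ?_⟩)
    obtain rfl := hM.eq_of_mk_mem hs ht
    exact hmate s hs ⟨hs₁, ht₂⟩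

theorem PathLabelling.label_ne_or_label_ne_of_verts (h : PathLabelling M E g c)
    (hfree : ∀ v ∈ p.verts, ¬ covered E v) : c p.x ≠ c p.y ∨ c p.y ≠ c p.z := by
  by_contra! hc
  rcases h.ends p.x p.y p.z (hfree p.x (P3.mem_verts.2 (.inl rfl)))
    (hfree p.y (P3.mem_verts.2 (.inr (.inl rfl)))) (hfree p.z (P3.mem_verts.2 (.inr (.inr rfl))))
    hc.1 hc.2 with h | h | h
  exacts [p.hxy h, p.hyz h, p.hxz h]

/-- The edges of the 3-paths in `S` can be distributed to two path systems, so that each of them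
takes one edge of every 3-path. -/
def Splittable (M : Finset (Sym2 α)) (S : Finset (P3 α)) : Prop :=
  ∃ E₁ E₂, Esub S = E₁ ∪ E₂ ∧ Disjoint E₁ E₂ ∧ (∃ g c, PathLabelling M E₁ g c) ∧
    ∃ g c, PathLabelling M E₂ g c

theorem Splittable.insert_of_label_ne (h₁ : PathLabelling M E₁ g₁ c₁)
    (h₂ : PathLabelling M E₂ g₂ c₂) (hE : Esub S = E₁ ∪ E₂) (hdisj : Disjoint E₁ E₂)
    (hfree : ∀ v ∈ p.verts, ¬ covered (E₁ ∪ E₂) v) (hxy : c₁ p.x ≠ c₁ p.y)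
    (hyz : c₂ p.y ≠ c₂ p.z) : Splittable M (insert p S) := by
  have hx := hfree p.x (P3.mem_verts.2 (.inl rfl))
  have hy := hfree p.y (P3.mem_verts.2 (.inr (.inl rfl)))
  have hz := hfree p.z (P3.mem_verts.2 (.inr (.inr rfl)))
  have hleft := Finset.subset_union_left (s₁ := E₁) (s₂ := E₂)
  have hright := Finset.subset_union_right (s₁ := E₁) (s₂ := E₂)
  refine ⟨insert s(p.x, p.y) E₁, insert s(p.y, p.z) E₂, ?_, ?_,
    h₁.exists_insert (fun h => hx (h.mono hleft)) (fun h => hy (h.mono hleft)) hxy,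
    h₂.exists_insert (fun h => hy (h.mono hright)) (fun h => hz (h.mono hright)) hyz⟩
  · rw [Esub, Finset.biUnion_insert, ← Esub, hE, P3.edges]
    ext e
    simp only [Finset.mem_union, Finset.mem_insert, Finset.mem_singleton]
    tauto
  · rw [Finset.disjoint_insert_left, Finset.disjoint_insert_right, Finset.mem_insert, not_or]
    exact ⟨⟨p.edges_ne, fun h => hx (covered_of_mk_mem_left (hright h))⟩,
      fun h => hy (covered_of_mk_mem_left (hleft h)), hdisj⟩

theorem exists_y_eq_of_covered_of_covered (hS : (S : Set (P3 α)).PairwiseDisjoint P3.verts)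
    (hE : Esub S = E₁ ∪ E₂) (hdisj : Disjoint E₁ E₂) (ht₁ : covered E₁ t) (ht₂ : covered E₂ t) :
    ∃ q ∈ S, t = q.y := by
  obtain ⟨e, he, hte⟩ := ht₁
  obtain ⟨f, hf, htf⟩ := ht₂
  obtain ⟨q, hq, heq⟩ := mem_Esub.1 (hE ▸ Finset.mem_union_left E₂ he)
  obtain ⟨r, hr, hfr⟩ := mem_Esub.1 (hE ▸ Finset.mem_union_right E₁ hf)
  obtain rfl := eq_of_mem_verts hS hq hr (P3.mem_verts_of_mem_edges heq hte)
    (P3.mem_verts_of_mem_edges hfr htf)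
  exact ⟨q, hq, P3.eq_y_of_mem_of_mem heq hfr (fun h => Finset.disjoint_left.1 hdisj he (h ▸ hf))
    hte htf⟩

/-- When `p` is added, `p.y` may be joined to `p.x` in one path system and to `p.z` in the other
unless labels clash; the condition `hmid` leaves at most one clash for each of `p.x` and `p.z`. -/
theorem Splittable.insert (h : Splittable M S) (hM : IsMatching M)
    (hS : (insert p S : Set (P3 α)).PairwiseDisjoint P3.verts) (hp : p ∉ S)
    (hxy : s(p.x, p.y) ∉ M) (hyz : s(p.y, p.z) ∉ M)
    (hmid : (∀ q ∈ S, s(p.y, q.y) ∉ M) ∨ ∀ q ∈ S, s(p.x, q.y) ∉ M ∧ s(p.z, q.y) ∉ M) :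
    Splittable M (insert p S) := by
  obtain ⟨E₁, E₂, hE, hdisj, ⟨g₁, c₁, h₁⟩, ⟨g₂, c₂, h₂⟩⟩ := h
  have hfree : ∀ v ∈ p.verts, ¬ covered (E₁ ∪ E₂) v := fun v hv =>
    hE ▸ not_covered_Esub_of_insert hS hp hv
  have hx := hfree p.x (P3.mem_verts.2 (.inl rfl))
  have hy := hfree p.y (P3.mem_verts.2 (.inr (.inl rfl)))
  have hz := hfree p.z (P3.mem_verts.2 (.inr (.inr rfl)))
  have hmate : ∀ u, (∀ q ∈ S, s(u, q.y) ∉ M) →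
      ∀ t, s(u, t) ∈ M → ¬ (covered E₁ t ∧ covered E₂ t) := by
    rintro u hu t ht ⟨ht₁, ht₂⟩
    obtain ⟨q, hq, rfl⟩ := exists_y_eq_of_covered_of_covered (hS.subset (Set.subset_insert p S))
      hE hdisj ht₁ ht₂
    exact hu q hq ht
  have hxy' : c₁ p.x ≠ c₁ p.y ∨ c₂ p.x ≠ c₂ p.y := by
    rcases hmid with hmid | hmid
    · exact (h₁.label_ne_or_label_ne h₂ hM hy hx p.hxy.symm (Sym2.eq_swap ▸ hxy)
        (hmate p.y hmid)).imp Ne.symm Ne.symm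
    · exact h₁.label_ne_or_label_ne h₂ hM hx hy p.hxy hxy (hmate p.x fun q hq => (hmid q hq).1)
  have hyz' : c₁ p.y ≠ c₁ p.z ∨ c₂ p.y ≠ c₂ p.z := by
    rcases hmid with hmid | hmid
    · exact h₁.label_ne_or_label_ne h₂ hM hy hz p.hyz hyz (hmate p.y hmid)
    · exact (h₁.label_ne_or_label_ne h₂ hM hz hy p.hyz.symm (Sym2.eq_swap ▸ hyz)
        (hmate p.z fun q hq => (hmid q hq).2)).imp Ne.symm Ne.symm
  have hthree₁ := h₁.label_ne_or_label_ne_of_verts fun v hv h =>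
    hfree v hv (h.mono Finset.subset_union_left)
  have hthree₂ := h₂.label_ne_or_label_ne_of_verts fun v hv h =>
    hfree v hv (h.mono Finset.subset_union_right)
  have hchoice : (c₁ p.x ≠ c₁ p.y ∧ c₂ p.y ≠ c₂ p.z) ∨ (c₂ p.x ≠ c₂ p.y ∧ c₁ p.y ≠ c₁ p.z) := by
    tauto
  rcases hchoice with ⟨hx, hz⟩ | ⟨hx, hz⟩
  · exact insert_of_label_ne h₁ h₂ hE hdisj hfree hx hz
  · rw [Finset.union_comm] at hE hfree
    exact insert_of_label_ne h₂ h₁ hE hdisj.symm hfree hx hz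

/-- If the matching partner of every middle vertex is a middle vertex, then no endpoint is matched
to a middle vertex. -/
theorem exists_forall_mk_y_notMem (hM : IsMatching M)
    (hS : (S : Set (P3 α)).PairwiseDisjoint P3.verts) (hne : S.Nonempty) :
    ∃ p ∈ S, (∀ q ∈ S.erase p, s(p.y, q.y) ∉ M) ∨
      ∀ q ∈ S.erase p, s(p.x, q.y) ∉ M ∧ s(p.z, q.y) ∉ M := by
  by_contra! h
  obtain ⟨p, hp⟩ := hne
  have hend : ∀ v ∈ p.verts, v ≠ p.y → ∀ q ∈ S, s(v, q.y) ∉ M := by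
    intro v hv hvy q hq hmem
    obtain ⟨⟨r, hr, hqr⟩, -⟩ := h q hq
    rw [Sym2.eq_swap] at hmem
    obtain rfl := hM.eq_of_mk_mem hmem hqr
    obtain rfl := eq_of_mem_verts hS hp (Finset.mem_of_mem_erase hr) hv
      (P3.mem_verts.2 (.inr (.inl rfl)))
    exact hvy rfl
  obtain ⟨-, q, hq, hmem⟩ := h p hp
  have hqS := Finset.mem_of_mem_erase hq
  exact hend p.z (P3.mem_verts.2 (.inr (.inr rfl))) p.hyz.symm q hqS
    (hmem (hend p.x (P3.mem_verts.2 (.inl rfl)) p.hxy q hqS))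

theorem IsMatching.splittable (hM : IsMatching M)
    (hS : (S : Set (P3 α)).PairwiseDisjoint P3.verts)
    (hne : ∀ p ∈ S, s(p.x, p.y) ∉ M ∧ s(p.y, p.z) ∉ M) : Splittable M S := by
  induction S using Finset.strongInduction with | _ S ih
  obtain rfl | hS' := S.eq_empty_or_nonempty
  · exact ⟨∅, ∅, rfl, Finset.disjoint_empty_left ∅, hM.exists_pathLabelling_empty,
      hM.exists_pathLabelling_empty⟩
  obtain ⟨p, hp, hmid⟩ := exists_forall_mk_y_notMem hM hS hS'
  have hrest : Splittable M (S.erase p) := ih _ (Finset.erase_ssubset hp)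
    (hS.subset (Finset.erase_subset p S)) fun q hq => hne q (Finset.mem_of_mem_erase hq)
  have hSp : (Insert.insert p (S.erase p : Finset (P3 α)) : Set (P3 α)).PairwiseDisjoint
      P3.verts := by
    rwa [← Finset.coe_insert, Finset.insert_erase hp]
  simpa only [Finset.insert_erase hp] using
    hrest.insert hM hSp (Finset.notMem_erase p S) (hne p hp).1 (hne p hp).2 hmid

end Splittable

section DeadEnds

variable {α : Type*} [DecidableEq α] {w : Sym2 α → ℝ} {M E F : Finset (Sym2 α)} {g : α → Bool}
  {c : α → α} {S D T : Finset (P3 α)} {p : P3 α} {f : P3 α → Sym2 α} {e : Sym2 α}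

/-- The edge `e` of the 3-path `p` may join different edges of `M`, but one of its endpoints is
unmatched or matched inside `p`. Adding such an edge to a path system only prolongs a path. -/
structure IsDeadEnd (M : Finset (Sym2 α)) (p : P3 α) (e : Sym2 α) : Prop where
  mem_edges : e ∈ p.edges
  goodEdge : goodEdge M e
  exists_mem : ∃ r ∈ e, ∀ t, s(r, t) ∈ M → t ∈ p.verts

theorem PathLabelling.exists_insert_of_isDeadEnd (h : PathLabelling M E g c) (hM : IsMatching M)
    (hp : ∀ v ∈ p.verts, ¬ covered E v) (he : IsDeadEnd M p e) :
    ∃ g' c', PathLabelling M (insert e E) g' c' := by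
  obtain ⟨r, ⟨v, rfl⟩, hr⟩ := he.exists_mem
  obtain ⟨hrv, hmem, -⟩ := goodEdge_mk_iff.1 he.goodEdge
  have hr_free := hp r (P3.mem_verts_of_mem_edges he.mem_edges (Sym2.mem_mk_left r v))
  have hv_free := hp v (P3.mem_verts_of_mem_edges he.mem_edges (Sym2.mem_mk_right r v))
  exact h.exists_insert hr_free hv_free
    (h.label_ne hM hr_free hv_free hrv fun t ht => ⟨fun htv => hmem (htv ▸ ht), hp t (hr t ht)⟩)

theorem covered_union_image (hf : ∀ p ∈ D, f p ∈ p.edges) {v : α}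
    (hv : covered (E ∪ D.image f) v) : covered E v ∨ ∃ p ∈ D, v ∈ p.verts := by
  obtain ⟨e, he, hve⟩ := hv
  rcases Finset.mem_union.1 he with he | he
  · exact .inl ⟨e, he, hve⟩
  · obtain ⟨p, hp, rfl⟩ := Finset.mem_image.1 he
    exact .inr ⟨p, hp, P3.mem_verts_of_mem_edges (hf p hp) hve⟩

theorem PathLabelling.exists_union_image (h : PathLabelling M E g c) (hM : IsMatching M)
    (hD : (D : Set (P3 α)).PairwiseDisjoint P3.verts)
    (hfree : ∀ p ∈ D, ∀ v ∈ p.verts, ¬ covered E v) (hf : ∀ p ∈ D, IsDeadEnd M p (f p)) :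
    ∃ g' c', PathLabelling M (E ∪ D.image f) g' c' := by
  induction D using Finset.induction_on with
  | empty => exact ⟨g, c, by rwa [Finset.image_empty, Finset.union_empty]⟩
  | insert p D hp ih =>
    rw [Finset.coe_insert] at hD
    have hpD := Finset.mem_insert_self p D
    obtain ⟨g', c', h'⟩ := ih (hD.subset (Set.subset_insert p D))
      (fun q hq => hfree q (Finset.mem_insert_of_mem hq))
      (fun q hq => hf q (Finset.mem_insert_of_mem hq))
    rw [Finset.image_insert, Finset.union_insert]
    refine h'.exists_insert_of_isDeadEnd hM (fun v hv hcov => ?_) (hf p hpD)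
    rcases covered_union_image (fun q hq => (hf q (Finset.mem_insert_of_mem hq)).mem_edges) hcov
      with hE | himage
    · exact hfree p hpD v hv hE
    · exact not_covered_Esub_of_insert hD hp hv (covered_Esub.2 himage)

/-- Every edge of `M` that meets `p` lies inside `p`. -/
def IsMateClosed (M : Finset (Sym2 α)) (p : P3 α) : Prop :=
  ∀ u ∈ p.verts, ∀ v, s(u, v) ∈ M → v ∈ p.verts

theorem IsContractedMatching.union_image (hF : IsContractedMatching M F)
    (hS : (S : Set (P3 α)).PairwiseDisjoint P3.verts)
    (hfree : ∀ p ∈ S, ∀ v ∈ p.verts, ¬ covered F v) (hclosed : ∀ p ∈ S, IsMateClosed M p)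
    (hf : ∀ p ∈ S, f p ∈ p.edges ∧ goodEdge M (f p)) :
    IsContractedMatching M (F ∪ S.image f) := by
  have hout : ∀ p ∈ S, ∀ e ∈ F ∪ S.image f, f p ≠ e → ∀ u ∈ f p, ∀ v ∈ e,
      u ≠ v ∧ s(u, v) ∉ M := by
    intro p hp e he hne u hu v hv
    have hup := P3.mem_verts_of_mem_edges (hf p hp).1 hu
    have hvp : v ∉ p.verts := by
      intro hvp
      rcases Finset.mem_union.1 he with he | he
      · exact hfree p hp v hvp ⟨e, he, hv⟩
      · obtain ⟨q, hq, rfl⟩ := Finset.mem_image.1 he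
        exact hne (eq_of_mem_verts hS hp hq hvp (P3.mem_verts_of_mem_edges (hf q hq).1 hv) ▸ rfl)
    exact ⟨fun h => hvp (h ▸ hup), fun h => hvp (hclosed p hp u hup v h)⟩
  refine ⟨fun e he => ?_, fun e he e' he' hne u hu v hv => ?_⟩
  · rcases Finset.mem_union.1 he with he | he
    · exact hF.1 e he
    · obtain ⟨p, hp, rfl⟩ := Finset.mem_image.1 he
      exact (hf p hp).2
  · rcases Finset.mem_union.1 he with heF | heS
    · rcases Finset.mem_union.1 he' with heF' | heS'
      · exact hF.2 e heF e' heF' hne u hu v hv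
      · obtain ⟨p, hp, rfl⟩ := Finset.mem_image.1 heS'
        exact (hout p hp e he hne.symm v hv u hu).imp Ne.symm fun h => Sym2.eq_swap ▸ h
    · obtain ⟨p, hp, rfl⟩ := Finset.mem_image.1 heS
      exact hout p hp e' he' hne u hu v hv

theorem disjoint_image_of_not_covered (hfree : ∀ p ∈ D, ∀ v ∈ p.verts, ¬ covered E v)
    (hf : ∀ p ∈ D, f p ∈ p.edges) : Disjoint E (D.image f) := by
  refine Finset.disjoint_left.2 fun e he heD => ?_
  obtain ⟨p, hp, rfl⟩ := Finset.mem_image.1 heD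
  have hmem := Sym2.out_fst_mem (f p)
  exact hfree p hp _ (P3.mem_verts_of_mem_edges (hf p hp) hmem) ⟨_, he, hmem⟩

theorem PathLabelling.exists_isPacking [Fintype α] (h : PathLabelling M E g c)
    (hgood : ∀ e ∈ E, goodEdge M e) (hw : ∀ e, 0 ≤ w e) (hM : IsMatching M)
    (hcard : Fintype.card α = 3 * M.card) (hS : (S : Set (P3 α)).PairwiseDisjoint P3.verts)
    (hfree : ∀ p ∈ S, ∀ v ∈ p.verts, ¬ covered E v) (hclosed : ∀ p ∈ S, IsMateClosed M p)
    (hf : ∀ p ∈ S, f p ∈ p.edges ∧ goodEdge M (f p)) :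
    ∃ Q : Finset (P3 α), IsPacking Q ∧
      ew w M + cw w M (S.image f) + 1 / 2 * cw w M E ≤ pw w Q := by
  have hcolor : ∀ b : Bool, ∃ Q : Finset (P3 α), IsPacking Q ∧
      ew w M + cw w M (S.image f) + cw w M (colorClass E g b) ≤ pw w Q := by
    intro b
    have hfree' : ∀ p ∈ S, ∀ v ∈ p.verts, ¬ covered (colorClass E g b) v :=
      fun p hp v hv hcov => hfree p hp v hv (hcov.mono (colorClass_subset E g b))
    obtain ⟨Q, hQ, hle⟩ := ((h.isContractedMatching_colorClass hgood b).union_image hS hfree'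
      hclosed hf).exists_isPacking hw hM hcard
    refine ⟨Q, hQ, le_of_eq_of_le ?_ hle⟩
    rw [cw, cw, cw, Finset.sum_union (disjoint_image_of_not_covered hfree' fun p hp => (hf p hp).1)]
    ring
  obtain ⟨Q₁, hQ₁, hle₁⟩ := hcolor true
  obtain ⟨Q₂, hQ₂, hle₂⟩ := hcolor false
  have hsum := h.cw_colorClass_add_cw_colorClass w
  rcases le_total (pw w Q₁) (pw w Q₂) with hle | hle
  exacts [⟨Q₂, hQ₂, by linarith⟩, ⟨Q₁, hQ₁, by linarith⟩]

theorem PathLabelling.exists_isPacking_of_isDeadEnd [Fintype α] (h : PathLabelling M E g c)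
    (hgood : ∀ e ∈ E, goodEdge M e) (hw : ∀ e, 0 ≤ w e) (hM : IsMatching M)
    (hcard : Fintype.card α = 3 * M.card)
    (hdisj : ((D ∪ T : Finset (P3 α)) : Set (P3 α)).PairwiseDisjoint P3.verts)
    (hDT : Disjoint D T) (hfree : ∀ p ∈ D ∪ T, ∀ v ∈ p.verts, ¬ covered E v)
    (hD : ∀ p ∈ D, IsDeadEnd M p (f p)) (hT : ∀ p ∈ T, IsMateClosed M p)
    (hf : ∀ p ∈ T, f p ∈ p.edges ∧ goodEdge M (f p)) :
    ∃ Q : Finset (P3 α), IsPacking Q ∧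
      ew w M + cw w M (T.image f) + 1 / 2 * (cw w M E + cw w M (D.image f)) ≤ pw w Q := by
  have hfreeD : ∀ p ∈ D, ∀ v ∈ p.verts, ¬ covered E v := fun p hp =>
    hfree p (Finset.mem_union_left T hp)
  obtain ⟨g', c', h'⟩ := h.exists_union_image hM
    (hdisj.subset (Finset.coe_subset.2 Finset.subset_union_left)) hfreeD hD
  have hfreeT : ∀ p ∈ T, ∀ v ∈ p.verts, ¬ covered (E ∪ D.image f) v := by
    intro p hp v hv hcov
    rcases covered_union_image (fun q hq => (hD q hq).mem_edges) hcov with hcov | ⟨q, hq, hvq⟩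
    · exact hfree p (Finset.mem_union_right D hp) v hv hcov
    · obtain rfl := eq_of_mem_verts hdisj (Finset.mem_union_right D hp)
        (Finset.mem_union_left T hq) hv hvq
      exact Finset.disjoint_left.1 hDT hq hp
  have hgood' : ∀ e ∈ E ∪ D.image f, goodEdge M e := by
    intro e he
    rcases Finset.mem_union.1 he with he | he
    · exact hgood e he
    · obtain ⟨p, hp, rfl⟩ := Finset.mem_image.1 he
      exact (hD p hp).goodEdge
  have hcw : cw w M (E ∪ D.image f) = cw w M E + cw w M (D.image f) :=
    Finset.sum_union (disjoint_image_of_not_covered hfreeD fun p hp => (hD p hp).mem_edges)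
  exact hcw ▸ h'.exists_isPacking hgood' hw hM hcard
    (hdisj.subset (Finset.coe_subset.2 Finset.subset_union_right)) hfreeT hT hf

theorem IsMatching.exists_isPacking_of_classes [Fintype α] (hM : IsMatching M)
    (hw : ∀ e, 0 ≤ w e) (hcard : Fintype.card α = 3 * M.card)
    (hdisj : ((S ∪ (D ∪ T) : Finset (P3 α)) : Set (P3 α)).PairwiseDisjoint P3.verts)
    (hDT : Disjoint D T) (hSDT : Disjoint S (D ∪ T))
    (hS : ∀ p ∈ S, ∀ e ∈ p.edges, goodEdge M e) (hD : ∀ p ∈ D, IsDeadEnd M p (f p))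
    (hT : ∀ p ∈ T, IsMateClosed M p) (hf : ∀ p ∈ T, f p ∈ p.edges ∧ goodEdge M (f p)) :
    ∃ Q : Finset (P3 α), IsPacking Q ∧ ew w M + cw w M (T.image f) +
      1 / 2 * cw w M (D.image f) + 1 / 4 * cw w M (Esub S) ≤ pw w Q := by
  obtain ⟨E₁, E₂, hE, hE₁₂, ⟨g₁, c₁, h₁⟩, ⟨g₂, c₂, h₂⟩⟩ := hM.splittable
    (hdisj.subset (Finset.coe_subset.2 Finset.subset_union_left)) fun p hp =>
      ⟨(goodEdge_mk_iff.1 (hS p hp _ (P3.mem_edges.2 (.inl rfl)))).2.1,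
        (goodEdge_mk_iff.1 (hS p hp _ (P3.mem_edges.2 (.inr rfl)))).2.1⟩
  have hfree : ∀ p ∈ D ∪ T, ∀ v ∈ p.verts, ¬ covered (Esub S) v := by
    intro p hp v hv hcov
    obtain ⟨q, hq, hvq⟩ := covered_Esub.1 hcov
    obtain rfl := eq_of_mem_verts hdisj (Finset.mem_union_right S hp)
      (Finset.mem_union_left _ hq) hv hvq
    exact Finset.disjoint_left.1 hSDT hq hp
  have hgood : ∀ e ∈ Esub S, goodEdge M e := by
    intro e he
    obtain ⟨p, hp, he⟩ := mem_Esub.1 he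
    exact hS p hp e he
  have hhalf : ∀ {E g c}, PathLabelling M E g c → E ⊆ Esub S → ∃ Q : Finset (P3 α), IsPacking Q ∧
      ew w M + cw w M (T.image f) + 1 / 2 * (cw w M E + cw w M (D.image f)) ≤ pw w Q :=
    fun h hES => h.exists_isPacking_of_isDeadEnd (fun e he => hgood e (hES he)) hw hM hcard
      (hdisj.subset (Finset.coe_subset.2 Finset.subset_union_right)) hDT
      (fun p hp v hv hcov => hfree p hp v hv (hcov.mono hES)) hD hT hf
  obtain ⟨Q₁, hQ₁, hle₁⟩ := hhalf h₁ (hE ▸ Finset.subset_union_left)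
  obtain ⟨Q₂, hQ₂, hle₂⟩ := hhalf h₂ (hE ▸ Finset.subset_union_right)
  have hsum : cw w M (Esub S) = cw w M E₁ + cw w M E₂ := hE ▸ Finset.sum_union hE₁₂
  rcases le_total (pw w Q₁) (pw w Q₂) with hle | hle
  exacts [⟨Q₂, hQ₂, by linarith⟩, ⟨Q₁, hQ₁, by linarith⟩]

end DeadEnds

section PathSums

variable {α : Type*} {P S : Finset (P3 α)} {p : P3 α} {c d : P3 α → Prop} {f : P3 α → Sym2 α}

theorem mem_psel : p ∈ psel P c ↔ p ∈ P ∧ c p := Finset.mem_filter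

theorem psel_subset (P : Finset (P3 α)) (c : P3 α → Prop) : psel P c ⊆ P :=
  Finset.filter_subset c P

theorem disjoint_psel (h : ∀ p, c p → ¬ d p) : Disjoint (psel P c) (psel P d) :=
  Finset.disjoint_filter.2 fun p _ => h p

theorem sum_psel_or (h : ∀ p, c p → ¬ d p) (g : P3 α → ℝ) :
    ∑ p ∈ psel P (fun p => c p ∨ d p), g p = ∑ p ∈ psel P c, g p + ∑ p ∈ psel P d, g p := by
  rw [← Finset.sum_disjUnion (disjoint_psel h)]
  refine Finset.sum_congr (Finset.ext fun p => ?_) fun _ _ => rfl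
  simp only [mem_psel, Finset.mem_disjUnion, and_or_left]

variable [DecidableEq α]

theorem sum_image_of_mem_edges (hS : (S : Set (P3 α)).PairwiseDisjoint P3.verts)
    (hf : ∀ p ∈ S, f p ∈ p.edges) (g : Sym2 α → ℝ) :
    ∑ e ∈ S.image f, g e = ∑ p ∈ S, g (f p) := by
  refine Finset.sum_image fun p hp q hq hpq => ?_
  have hmem := Sym2.out_fst_mem (f p)
  exact eq_of_mem_verts hS hp hq (P3.mem_verts_of_mem_edges (hf p hp) hmem)
    (P3.mem_verts_of_mem_edges (hf q hq) (hpq ▸ hmem))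

theorem sum_Esub (hS : (S : Set (P3 α)).PairwiseDisjoint P3.verts) (g : Sym2 α → ℝ) :
    ∑ e ∈ Esub S, g e = ∑ p ∈ S, (g s(p.x, p.y) + g s(p.y, p.z)) := by
  rw [Esub, Finset.sum_biUnion]
  · exact Finset.sum_congr rfl fun p _ => Finset.sum_pair p.edges_ne
  · refine fun p hp q hq hpq => Finset.disjoint_left.2 fun e hep heq => hpq ?_
    have hmem := Sym2.out_fst_mem e
    exact eq_of_mem_verts hS hp hq (P3.mem_verts_of_mem_edges hep hmem)
      (P3.mem_verts_of_mem_edges heq hmem)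

theorem P3.sum_verts {β : Type*} [AddCommMonoid β] (p : P3 α) (h : α → β) :
    ∑ v ∈ p.verts, h v = h p.x + h p.y + h p.z := by
  have hx : p.x ∉ ({p.y, p.z} : Finset α) := by simp [p.hxy, p.hxz]
  rw [P3.verts, Finset.sum_insert hx, Finset.sum_pair p.hyz, add_assoc]

end PathSums

section MiddleEdges

variable {α : Type*} {M : Finset (Sym2 α)} {u v : α} {e : Sym2 α}

theorem isMiddle_mk_iff :
    isMiddle M s(u, v) ↔ covered M u ∧ ¬ covered M v ∨ covered M v ∧ ¬ covered M u := by
  constructor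
  · rintro ⟨a, b, hab, h⟩
    rcases Sym2.eq_iff.1 hab with ⟨rfl, rfl⟩ | ⟨rfl, rfl⟩
    exacts [.inl h, .inr h]
  · rintro (h | h)
    exacts [⟨u, v, rfl, h⟩, ⟨v, u, Sym2.eq_swap, h⟩]

theorem isMiddle.goodEdge (h : isMiddle M e) : goodEdge M e := .inr h

variable [DecidableEq α]

theorem isMiddle.cost_eq (h : isMiddle M e) (w : Sym2 α → ℝ) : cost w M e = w e := by
  obtain ⟨u, v, rfl, -, hv⟩ := h
  exact cost_of_not_covered w (Sym2.mem_mk_right u v) hv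

theorem isMiddle.isDeadEnd {p : P3 α} (h : isMiddle M e) (he : e ∈ p.edges) :
    IsDeadEnd M p e := by
  refine ⟨he, h.goodEdge, ?_⟩
  obtain ⟨u, v, rfl, -, hv⟩ := h
  exact ⟨v, Sym2.mem_mk_right u v, fun t ht => absurd (covered_of_mk_mem_left ht) hv⟩

end MiddleEdges

section Classes

variable {α : Type*} [DecidableEq α] {M : Finset (Sym2 α)} {P : Finset (P3 α)} {p : P3 α}
  {w : Sym2 α → ℝ} {e : Sym2 α}

theorem kcnt_eq (M : Finset (Sym2 α)) (p : P3 α) :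
    kcnt M p = (if covered M p.x then 1 else 0) + (if covered M p.y then 1 else 0) +
      (if covered M p.z then 1 else 0) := by
  rw [kcnt, Finset.card_filter, P3.sum_verts]

theorem cls3.isMiddle_of_mem_edges (h : cls3 M p) (he : e ∈ p.edges) : isMiddle M e := by
  obtain ⟨hk, hy⟩ := h
  rw [kcnt_eq] at hk
  rcases P3.mem_edges.1 he with rfl | rfl <;> rw [isMiddle_mk_iff] <;> grind

theorem cls4.isMiddle_of_mem_edges (h : cls4 M p) (he : e ∈ p.edges) : isMiddle M e := by
  obtain ⟨hk, hy⟩ := h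
  rw [kcnt_eq] at hk
  rcases P3.mem_edges.1 he with rfl | rfl <;> rw [isMiddle_mk_iff] <;> grind

theorem goodEdge_of_cls6_or_cls8 (h : cls6 M p ∨ cls8 M p) (he : e ∈ p.edges) :
    goodEdge M e := by
  have hxy := p.hxy
  have hyz := p.hyz
  unfold cls6 cls8 at h
  rw [kcnt_eq] at h
  rcases P3.mem_edges.1 he with rfl | rfl <;> rw [goodEdge_mk_iff] <;> grind

/-- The edge of a 3-path of class 2, 3, 4, 5 or 7 that belongs to the set `X_i` of its class. -/
noncomputable def selectedEdge (w : Sym2 α → ℝ) (M : Finset (Sym2 α)) (p : P3 α) : Sym2 α :=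
  if cls2 M p then if covered M p.x then s(p.x, p.y) else s(p.y, p.z)
  else if cls3 M p ∨ cls4 M p then heavy w p
  else if s(p.x, p.y) ∈ M then s(p.y, p.z) else s(p.x, p.y)

theorem selectedEdge_of_cls2 (h : cls2 M p) :
    selectedEdge w M p = if covered M p.x then s(p.x, p.y) else s(p.y, p.z) := if_pos h

theorem selectedEdge_of_cls3_or_cls4 (h : cls3 M p ∨ cls4 M p) :
    selectedEdge w M p = heavy w p := by
  rw [selectedEdge, if_neg (by grind [cls2, cls3, cls4]), if_pos h]

theorem selectedEdge_of_cls5_or_cls7 (h : cls5 M p ∨ cls7 M p) :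
    selectedEdge w M p = if s(p.x, p.y) ∈ M then s(p.y, p.z) else s(p.x, p.y) := by
  rw [selectedEdge, if_neg (by grind [cls2, cls5, cls7]),
    if_neg (by grind [cls3, cls4, cls5, cls7])]

theorem heavy_mem_edges (w : Sym2 α → ℝ) (p : P3 α) : heavy w p ∈ p.edges := by
  rw [P3.mem_edges, heavy]
  split_ifs <;> simp

theorem selectedEdge_mem_edges (w : Sym2 α → ℝ) (M : Finset (Sym2 α)) (p : P3 α) :
    selectedEdge w M p ∈ p.edges := by
  have h := heavy_mem_edges w p
  rw [P3.mem_edges] at h ⊢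
  unfold selectedEdge
  split_ifs <;> simp_all

theorem cls2.isMiddle_selectedEdge (h : cls2 M p) (w : Sym2 α → ℝ) :
    isMiddle M (selectedEdge w M p) := by
  rw [selectedEdge_of_cls2 h]
  obtain ⟨hk, hy⟩ := h
  rw [kcnt_eq] at hk
  split_ifs <;> rw [isMiddle_mk_iff] <;> grind

theorem cls5.isMiddle_selectedEdge (h : cls5 M p) (w : Sym2 α → ℝ) :
    isMiddle M (selectedEdge w M p) := by
  rw [selectedEdge_of_cls5_or_cls7 (.inl h)]
  obtain ⟨hk, hy, hM⟩ := h
  rw [kcnt_eq] at hk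
  have hx : s(p.x, p.y) ∈ M → covered M p.x := covered_of_mk_mem_left
  have hz : s(p.y, p.z) ∈ M → covered M p.z := covered_of_mk_mem_right
  unfold exOne at hM
  split_ifs <;> rw [isMiddle_mk_iff] <;> grind

theorem cls5.isMateClosed (h : cls5 M p) (hM : IsMatching M) : IsMateClosed M p := by
  have hmid := h.isMiddle_selectedEdge fun _ => 0
  rw [selectedEdge_of_cls5_or_cls7 (.inl h)] at hmid
  obtain ⟨-, hy, hexOne⟩ := h
  intro u hu v huv
  have hu_cov := covered_of_mk_mem_left huv
  rw [P3.mem_verts] at hu ⊢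
  rcases hexOne with ⟨hxy, -⟩ | ⟨hxy, hyz⟩
  · rw [if_pos hxy, isMiddle_mk_iff] at hmid
    have hyx : s(p.y, p.x) ∈ M := Sym2.eq_swap ▸ hxy
    rcases hu with rfl | rfl | rfl
    · exact .inr (.inl (hM.eq_of_mk_mem huv hxy))
    · exact .inl (hM.eq_of_mk_mem huv hyx)
    · tauto
  · rw [if_neg hxy, isMiddle_mk_iff] at hmid
    have hzy : s(p.z, p.y) ∈ M := Sym2.eq_swap ▸ hyz
    rcases hu with rfl | rfl | rfl
    · tauto
    · exact .inr (.inr (hM.eq_of_mk_mem huv hyz))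
    · exact .inr (.inl (hM.eq_of_mk_mem huv hzy))

theorem cls7.isDeadEnd_selectedEdge (h : cls7 M p) (hM : IsMatching M) (w : Sym2 α → ℝ) :
    IsDeadEnd M p (selectedEdge w M p) := by
  have hedge := selectedEdge_mem_edges w M p
  rw [selectedEdge_of_cls5_or_cls7 (.inr h)] at hedge ⊢
  rcases h.2 with ⟨hxy, hyz⟩ | ⟨hxy, hyz⟩
  · rw [if_pos hxy] at hedge ⊢
    have hyx : s(p.y, p.x) ∈ M := Sym2.eq_swap ▸ hxy
    refine ⟨hedge, goodEdge_mk_iff.2 ⟨p.hyz, hyz, .inl (covered_of_mk_mem_left hyx)⟩,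
      p.y, Sym2.mem_mk_left p.y p.z, fun t ht => ?_⟩
    exact P3.mem_verts.2 (.inl (hM.eq_of_mk_mem ht hyx))
  · rw [if_neg hxy] at hedge ⊢
    refine ⟨hedge, goodEdge_mk_iff.2 ⟨p.hxy, hxy, .inr (covered_of_mk_mem_left hyz)⟩,
      p.y, Sym2.mem_mk_right p.x p.y, fun t ht => ?_⟩
    exact P3.mem_verts.2 (.inr (.inr (hM.eq_of_mk_mem ht hyz)))

theorem isMiddle_selectedEdge (h : cls2 M p ∨ cls3 M p ∨ cls4 M p) (w : Sym2 α → ℝ) :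
    isMiddle M (selectedEdge w M p) := by
  have hedge := selectedEdge_mem_edges w M p
  rcases h with h | h | h
  exacts [h.isMiddle_selectedEdge w, h.isMiddle_of_mem_edges hedge, h.isMiddle_of_mem_edges hedge]

theorem IsMatching.exists_isPacking_of_pairwiseDisjoint [Fintype α] (hM : IsMatching M)
    (hw : ∀ e, 0 ≤ w e) (hcard : Fintype.card α = 3 * M.card)
    (hP : (P : Set (P3 α)).PairwiseDisjoint P3.verts) :
    ∃ Q : Finset (P3 α), IsPacking Q ∧ ew w M +
      ∑ p ∈ psel P (cls5 M), cost w M (selectedEdge w M p) +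
      1 / 2 * ∑ p ∈ psel P (fun p => (cls2 M p ∨ cls3 M p ∨ cls4 M p) ∨ cls7 M p),
        cost w M (selectedEdge w M p) +
      1 / 4 * ∑ p ∈ psel P (fun p => cls6 M p ∨ cls8 M p),
        (cost w M s(p.x, p.y) + cost w M s(p.y, p.z)) ≤ pw w Q := by
  have hsub (c : P3 α → Prop) : (psel P c : Set (P3 α)).PairwiseDisjoint P3.verts :=
    hP.subset (Finset.coe_subset.2 (psel_subset P c))
  have hedges (c : P3 α → Prop) : ∀ p ∈ psel P c, selectedEdge w M p ∈ p.edges :=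
    fun p _ => selectedEdge_mem_edges w M p
  rw [← sum_image_of_mem_edges (hsub _) (hedges _), ← sum_image_of_mem_edges (hsub _) (hedges _),
    ← sum_Esub (hsub _)]
  refine hM.exists_isPacking_of_classes hw hcard (hP.subset (Finset.coe_subset.2 ?_))
    (disjoint_psel fun p => ?_) (Finset.disjoint_union_right.2
      ⟨disjoint_psel fun p => ?_, disjoint_psel fun p => ?_⟩)
    (fun p hp e he => goodEdge_of_cls6_or_cls8 (mem_psel.1 hp).2 he) (fun p hp => ?_)
    (fun p hp => (mem_psel.1 hp).2.isMateClosed hM) fun p hp =>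
      ⟨selectedEdge_mem_edges w M p, ((mem_psel.1 hp).2.isMiddle_selectedEdge w).goodEdge⟩
  · exact Finset.union_subset (psel_subset P _)
      (Finset.union_subset (psel_subset P _) (psel_subset P _))
  · grind [cls2, cls3, cls4, cls5, cls7]
  · grind [cls2, cls3, cls4, cls6, cls7, cls8, exOne]
  · grind [cls5, cls6, cls8, exOne]
  · rcases (mem_psel.1 hp).2 with h | h
    · exact (isMiddle_selectedEdge h w).isDeadEnd (selectedEdge_mem_edges w M p)
    · exact h.isDeadEnd_selectedEdge hM w

end Classes

section Charges

variable {α : Type*} [DecidableEq α] {w : Sym2 α → ℝ} {M : Finset (Sym2 α)}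
  {p : P3 α} {u v : α}

theorem le_cost_add (hw : ∀ e, 0 ≤ w e) (M : Finset (Sym2 α)) (u v : α) :
    w s(u, v) ≤
      cost w M s(u, v) + (2 / 3 * w (eMatch M u) + 1 / 3 * w (eMatch M v)) := by
  have hu_nonneg := hw (eMatch M u)
  have hv_nonneg := hw (eMatch M v)
  by_cases hu : covered M u
  · by_cases hv : covered M v
    · have hmin_u := min_le_left (w (eMatch M u)) (w (eMatch M v))
      have hmin_v := min_le_right (w (eMatch M u)) (w (eMatch M v))
      rw [cost_of_covered w hu hv]
      linarith
    · rw [cost_of_not_covered w (Sym2.mem_mk_right u v) hv]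
      linarith
  · rw [cost_of_not_covered w (Sym2.mem_mk_left u v) hu]
    linarith

theorem le_cost_add' (hw : ∀ e, 0 ≤ w e) (M : Finset (Sym2 α)) (u v : α) :
    w s(u, v) ≤
      cost w M s(u, v) + (1 / 3 * w (eMatch M u) + 2 / 3 * w (eMatch M v)) := by
  rw [Sym2.eq_swap, add_comm (1 / 3 * _)]
  exact le_cost_add hw M v u

/-- The fraction of the weight of the edge of `M` at a vertex `v` of the 3-path `p` that is
charged to `p`, in order to make up for the difference between weights and costs on `p`. -/
noncomputable def charge (M : Finset (Sym2 α)) (p : P3 α) (v : α) : ℝ :=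
  if cls6 M p ∧ v = p.y then 1 / 12 else if cls6 M p ∨ cls7 M p ∨ cls8 M p then 1 / 6 else 0

theorem charge_nonneg (M : Finset (Sym2 α)) (p : P3 α) (v : α) : 0 ≤ charge M p v := by
  unfold charge
  split_ifs <;> norm_num

theorem charge_le (M : Finset (Sym2 α)) (p : P3 α) (v : α) : charge M p v ≤ 1 / 6 := by
  unfold charge
  split_ifs <;> norm_num

theorem cls6.charge_y (h : cls6 M p) : charge M p p.y = 1 / 12 := if_pos ⟨h, rfl⟩

theorem cls6.charge_of_ne (h : cls6 M p) (hv : v ≠ p.y) : charge M p v = 1 / 6 := by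
  rw [charge, if_neg fun h' => hv h'.2, if_pos (.inl h)]

theorem charge_eq_zero (h : (cls2 M p ∨ cls3 M p ∨ cls4 M p) ∨ cls5 M p) (v : α) :
    charge M p v = 0 := by
  rw [charge, if_neg (by grind [cls2, cls3, cls4, cls5, cls6, exOne]),
    if_neg (by grind [cls2, cls3, cls4, cls5, cls6, cls7, cls8, exOne])]

theorem charge_of_cls7_or_cls8 (h : cls7 M p ∨ cls8 M p) (v : α) : charge M p v = 1 / 6 := by
  rw [charge, if_neg (by grind [cls6, cls7, cls8]), if_pos (.inr h)]

/-- The total weight charged to the 3-path `p`. -/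
noncomputable def pathCharge (w : Sym2 α → ℝ) (M : Finset (Sym2 α)) (p : P3 α) : ℝ :=
  ∑ v ∈ p.verts with covered M v, charge M p v * w (eMatch M v)

theorem pathCharge_nonneg (hw : ∀ e, 0 ≤ w e) (M : Finset (Sym2 α)) (p : P3 α) :
    0 ≤ pathCharge w M p :=
  Finset.sum_nonneg fun v _ => mul_nonneg (charge_nonneg M p v) (hw _)

theorem covered_of_kcnt_eq_three (h : kcnt M p = 3) :
    ∀ v ∈ p.verts, covered M v :=
  Finset.filter_eq_self.1 (Finset.eq_of_subset_of_card_le (Finset.filter_subset _ _)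
    (p.card_verts.trans h.symm).le)

theorem pathCharge_of_cls7_or_cls8 (h : cls7 M p ∨ cls8 M p) :
    pathCharge w M p =
      1 / 6 * (w (eMatch M p.x) + w (eMatch M p.y) + w (eMatch M p.z)) := by
  have hcov := covered_of_kcnt_eq_three (h.elim And.left And.left)
  rw [pathCharge, Finset.filter_true_of_mem hcov, P3.sum_verts]
  simp only [charge_of_cls7_or_cls8 h, mul_add]

theorem cls8.wt_le (h : cls8 M p) (hw : ∀ e, 0 ≤ w e) :
    p.wt w ≤ cost w M s(p.x, p.y) + cost w M s(p.y, p.z) + 4 * pathCharge w M p := by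
  have hxy := le_cost_add hw M p.x p.y
  have hyz := le_cost_add' hw M p.y p.z
  rw [pathCharge_of_cls7_or_cls8 (.inr h), P3.wt]
  linarith

theorem cls6.wt_le (h : cls6 M p) (hw : ∀ e, 0 ≤ w e) :
    p.wt w ≤ cost w M s(p.x, p.y) + cost w M s(p.y, p.z) + 4 * pathCharge w M p := by
  have hxy := le_cost_add hw M p.x p.y
  have hyz := le_cost_add' hw M p.y p.z
  have hk := h.1
  rw [kcnt_eq, if_pos h.2.1] at hk
  rw [pathCharge, Finset.sum_filter, P3.sum_verts, if_pos h.2.1, h.charge_y,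
    h.charge_of_ne p.hxy, h.charge_of_ne p.hyz.symm, P3.wt]
  by_cases hx : covered M p.x <;> by_cases hz : covered M p.z
  · simp [hx, hz] at hk
  · rw [if_pos hx, if_neg hz, cost_of_not_covered w (Sym2.mem_mk_right p.y p.z) hz]
    linarith
  · rw [if_neg hx, if_pos hz, cost_of_not_covered w (Sym2.mem_mk_left p.x p.y) hx]
    linarith
  · simp [hx, hz] at hk

theorem IsMatching.eMatch_eq_of_mk_mem (hM : IsMatching M) (h : s(u, v) ∈ M) :
    eMatch M u = eMatch M v :=
  (hM.eMatch_eq h (Sym2.mem_mk_left u v)).trans (hM.eMatch_eq h (Sym2.mem_mk_right u v)).symm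

theorem cls7.selectedEdge_le (h : cls7 M p) (hM : IsMatching M) (hw : ∀ e, 0 ≤ w e) :
    w (selectedEdge w M p) ≤ cost w M (selectedEdge w M p) + 2 * pathCharge w M p := by
  rw [selectedEdge_of_cls5_or_cls7 (.inr h), pathCharge_of_cls7_or_cls8 (.inl h)]
  rcases h.2 with ⟨hxy, -⟩ | ⟨hxy, hyz⟩
  · rw [if_pos hxy, hM.eMatch_eq_of_mk_mem hxy]
    linarith [le_cost_add hw M p.y p.z]
  · rw [if_neg hxy, ← hM.eMatch_eq_of_mk_mem hyz]
    linarith [le_cost_add' hw M p.x p.y]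

end Charges

section EdgeCharges

variable {α : Type*} [DecidableEq α] {w : Sym2 α → ℝ} {M : Finset (Sym2 α)}
  {P : Finset (P3 α)} {p : P3 α} {v r : α} {e f g : Sym2 α}

/-- The part of the weight of the edge of `M` at `v` that is charged through `v`. -/
noncomputable def vertexCharge (P : Finset (P3 α)) (M : Finset (Sym2 α)) (v : α) : ℝ :=
  ∑ p ∈ P with v ∈ p.verts, charge M p v

/-- The part of the weight of the edge `f` of `M` that is charged to the 3-paths of `P`. -/
noncomputable def edgeCharge (P : Finset (P3 α)) (M : Finset (Sym2 α)) (f : Sym2 α) : ℝ :=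
  ∑ v ∈ f.toFinset, vertexCharge P M v

theorem IsMatching.sum_pathCharge (hM : IsMatching M) (w : Sym2 α → ℝ) (P : Finset (P3 α)) :
    ∑ p ∈ P, pathCharge w M p = ∑ f ∈ M, edgeCharge P M f * w f := by
  have hswap : ∑ p ∈ P, pathCharge w M p =
      ∑ v ∈ vertexSet M, ∑ p ∈ P with v ∈ p.verts, charge M p v * w (eMatch M v) := by
    refine Finset.sum_comm' fun p v => ?_
    rw [Finset.mem_filter, Finset.mem_filter, mem_vertexSet, and_assoc]
  rw [hswap, hM.sum_vertexSet]
  refine Finset.sum_congr rfl fun f hf => ?_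
  rw [edgeCharge, Finset.sum_mul]
  refine Finset.sum_congr rfl fun v hv => ?_
  rw [vertexCharge, Finset.sum_mul, hM.eMatch_eq hf (Sym2.mem_toFinset.1 hv)]

theorem vertexCharge_eq_charge (hP : (P : Set (P3 α)).PairwiseDisjoint P3.verts) (hp : p ∈ P)
    (hv : v ∈ p.verts) : vertexCharge P M v = charge M p v := by
  refine Finset.sum_eq_single_of_mem p (Finset.mem_filter.2 ⟨hp, hv⟩) fun q hq hqp => ?_
  obtain ⟨hq, hvq⟩ := Finset.mem_filter.1 hq
  exact absurd (eq_of_mem_verts hP hq hp hvq hv) hqp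

theorem vertexCharge_le (hP : (P : Set (P3 α)).PairwiseDisjoint P3.verts)
    (M : Finset (Sym2 α)) (v : α) : vertexCharge P M v ≤ 1 / 6 := by
  by_cases h : ∃ p ∈ P, v ∈ p.verts
  · obtain ⟨p, hp, hv⟩ := h
    exact (vertexCharge_eq_charge hP hp hv).trans_le (charge_le M p v)
  · rw [vertexCharge, Finset.filter_false_of_mem fun p hp hv => h ⟨p, hp, hv⟩, Finset.sum_empty]
    norm_num

theorem edgeCharge_eq_add (hr : r ∈ f) (hv : v ∈ f) (h : r ≠ v) :
    edgeCharge P M f = vertexCharge P M r + vertexCharge P M v := by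
  rw [(Sym2.mem_and_mem_iff h).1 ⟨hr, hv⟩, edgeCharge, Sym2.toFinset_mk_eq, Finset.sum_pair h]

theorem IsMatching.edgeCharge_le_add (hM : IsMatching M)
    (hP : (P : Set (P3 α)).PairwiseDisjoint P3.verts) (hf : f ∈ M) (hr : r ∈ f) :
    edgeCharge P M f ≤ vertexCharge P M r + 1 / 6 := by
  obtain ⟨v, rfl⟩ := hr
  rw [edgeCharge_eq_add (Sym2.mem_mk_left r v) (Sym2.mem_mk_right r v) (hM.ne_of_mk_mem hf)]
  exact add_le_add_right (vertexCharge_le hP M v) _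

theorem cls6.eq_y_of_isMiddle (h : cls6 M p) (hg : g ∈ p.edges) (hmid : isMiddle M g)
    (hr : r ∈ g) (hcov : covered M r) : r = p.y := by
  have hy := h.2.1
  rcases P3.mem_edges.1 hg with rfl | rfl <;> rw [isMiddle_mk_iff] at hmid <;>
    rw [Sym2.mem_iff] at hr <;> grind

theorem cls6.eq_of_isMiddle (h : cls6 M p) (he : e ∈ p.edges) (hemid : isMiddle M e)
    (hg : g ∈ p.edges) (hgmid : isMiddle M g) : e = g := by
  obtain ⟨hk, hy, -⟩ := h
  rw [kcnt_eq] at hk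
  rcases P3.mem_edges.1 he with rfl | rfl <;> rcases P3.mem_edges.1 hg with rfl | rfl <;>
    rw [isMiddle_mk_iff] at hemid hgmid <;> grind

theorem exists_cls6_of_shares (hf : f ∈ M) (hg : middleIn M (psel P (cls6 M)) g)
    (hfg : shares f g) : ∃ p ∈ P, cls6 M p ∧ g ∈ p.edges ∧ p.y ∈ f := by
  obtain ⟨⟨p, hp, hgp⟩, hmid⟩ := hg
  obtain ⟨hpP, h⟩ := mem_psel.1 hp
  obtain ⟨r, hrf, hrg⟩ := hfg
  exact ⟨p, hpP, h, hgp, h.eq_y_of_isMiddle hgp hmid hrg ⟨f, hf, hrf⟩ ▸ hrf⟩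

theorem exists_cls234_of_shares (hg : middleIn M (P234 P M) g) (hfg : shares f g) :
    ∃ p ∈ P, (cls2 M p ∨ cls3 M p ∨ cls4 M p) ∧ ∃ r ∈ f, r ∈ p.verts := by
  obtain ⟨⟨p, hp, hgp⟩, -⟩ := hg
  obtain ⟨r, hrf, hrg⟩ := hfg
  exact ⟨p, (mem_psel.1 hp).1, (mem_psel.1 hp).2, r, hrf, P3.mem_verts_of_mem_edges hgp hrg⟩

theorem cls6.vertexCharge_y (h : cls6 M p) (hP : (P : Set (P3 α)).PairwiseDisjoint P3.verts)
    (hp : p ∈ P) : vertexCharge P M p.y = 1 / 12 :=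
  (vertexCharge_eq_charge hP hp (P3.mem_verts.2 (.inr (.inl rfl)))).trans h.charge_y

theorem exists_vertexCharge_eq_zero (hP : (P : Set (P3 α)).PairwiseDisjoint P3.verts)
    (hg : middleIn M (P234 P M) g) (hfg : shares f g) : ∃ r ∈ f, vertexCharge P M r = 0 := by
  obtain ⟨p, hp, h, r, hrf, hrp⟩ := exists_cls234_of_shares hg hfg
  exact ⟨r, hrf, (vertexCharge_eq_charge hP hp hrp).trans (charge_eq_zero (.inl h) r)⟩

theorem mem_mid6 : g ∈ mid6 P M ↔ middleIn M (psel P (cls6 M)) g := by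
  rw [mid6, Finset.mem_filter, mem_Esub, middleIn]

theorem exists_mem_Esub_cls5 (h : f ∈ Mset4 P M) : ∃ p ∈ P, cls5 M p ∧ f ∈ p.edges := by
  obtain ⟨p, hp, hfp⟩ := mem_Esub.1 (Finset.mem_inter.1 h).2
  exact ⟨p, (mem_psel.1 hp).1, (mem_psel.1 hp).2, hfp⟩

theorem vertexCharge_eq_zero_of_mem_Mset4 (hP : (P : Set (P3 α)).PairwiseDisjoint P3.verts)
    (h : f ∈ Mset4 P M) (hv : v ∈ f) : vertexCharge P M v = 0 := by
  obtain ⟨p, hp, h5, hfp⟩ := exists_mem_Esub_cls5 h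
  rw [vertexCharge_eq_charge hP hp (P3.mem_verts_of_mem_edges hfp hv), charge_eq_zero (.inr h5)]

theorem edgeCharge_eq_zero_of_mem_Mset4 (hP : (P : Set (P3 α)).PairwiseDisjoint P3.verts)
    (h : f ∈ Mset4 P M) : edgeCharge P M f = 0 :=
  Finset.sum_eq_zero fun _ hv =>
    vertexCharge_eq_zero_of_mem_Mset4 hP h (Sym2.mem_toFinset.1 hv)

theorem ew_eq_sum_ite (w : Sym2 α → ℝ) {F : Finset (Sym2 α)} (h : F ⊆ M) :
    ew w F = ∑ f ∈ M, if f ∈ F then w f else 0 := by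
  rw [← Finset.sum_filter, Finset.filter_mem_eq_inter, Finset.inter_eq_right.2 h, ew]

variable [Fintype α]

theorem mem_Mset1 :
    f ∈ Mset1 P M ↔ f ∈ M ∧ ∃ g, middleIn M (psel P (cls6 M)) g ∧ shares f g :=
  Finset.mem_filter

theorem mem_Mset2 :
    f ∈ Mset2 P M ↔ f ∈ M ∧ (∃ g, middleIn M P g ∧ shares f g) ∧
      ∀ g, middleIn M P g → shares f g → middleIn M (P234 P M) g :=
  Finset.mem_filter

theorem mem_Mset1' :
    f ∈ Mset1' P M ↔ f ∈ Mset1 P M ∧ {g ∈ mid6 P M | shares f g}.card = 1 ∧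
      ∀ g, middleIn M (P234 P M) g → ¬ shares f g :=
  Finset.mem_filter

theorem mem_Mset1'' :
    f ∈ Mset1'' P M ↔ f ∈ Mset1 P M ∧ {g ∈ mid6 P M | shares f g}.card = 2 :=
  Finset.mem_filter

theorem mem_Mset1''' :
    f ∈ Mset1''' P M ↔ f ∈ Mset1 P M ∧ {g ∈ mid6 P M | shares f g}.card = 1 ∧
      ∃ g, middleIn M (P234 P M) g ∧ shares f g :=
  Finset.mem_filter

theorem exists_vertexCharge_of_mem_Mset1 (hP : (P : Set (P3 α)).PairwiseDisjoint P3.verts)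
    (h : f ∈ Mset1 P M) : ∃ r ∈ f, vertexCharge P M r = 1 / 12 := by
  obtain ⟨hf, g, hg, hfg⟩ := mem_Mset1.1 h
  obtain ⟨p, hp, h6, -, hy⟩ := exists_cls6_of_shares hf hg hfg
  exact ⟨p.y, hy, h6.vertexCharge_y hP hp⟩

theorem IsMatching.edgeCharge_le_of_mem_Mset1 (hM : IsMatching M)
    (hP : (P : Set (P3 α)).PairwiseDisjoint P3.verts) (h : f ∈ Mset1 P M) :
    edgeCharge P M f ≤ 1 / 4 := by
  obtain ⟨r, hr, hcharge⟩ := exists_vertexCharge_of_mem_Mset1 hP h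
  linarith [hM.edgeCharge_le_add hP (mem_Mset1.1 h).1 hr]

theorem edgeCharge_of_mem_Mset1'' (hP : (P : Set (P3 α)).PairwiseDisjoint P3.verts)
    (h : f ∈ Mset1'' P M) : edgeCharge P M f = 1 / 6 := by
  obtain ⟨h1, hcard⟩ := mem_Mset1''.1 h
  have hf := (mem_Mset1.1 h1).1
  obtain ⟨e, g, hne, heq⟩ := Finset.card_eq_two.1 hcard
  have hmid : ∀ g' ∈ ({e, g} : Finset (Sym2 α)),
      middleIn M (psel P (cls6 M)) g' ∧ shares f g' := by
    intro g' hg'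
    rw [← heq, Finset.mem_filter, mem_mid6] at hg'
    exact hg'
  obtain ⟨he, hfe⟩ := hmid e (Finset.mem_insert_self e {g})
  obtain ⟨hg, hfg⟩ := hmid g (Finset.mem_insert_of_mem (Finset.mem_singleton_self g))
  obtain ⟨p, hp, hp6, hep, hpf⟩ := exists_cls6_of_shares hf he hfe
  obtain ⟨q, hq, hq6, hgq, hqf⟩ := exists_cls6_of_shares hf hg hfg
  have hpq : p.y ≠ q.y := by
    intro hy
    obtain rfl := eq_of_mem_verts hP hp hq (P3.mem_verts.2 (.inr (.inl rfl)))
      (P3.mem_verts.2 (.inr (.inl hy)))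
    exact hne (hp6.eq_of_isMiddle hep he.2 hgq hg.2)
  rw [edgeCharge_eq_add hpf hqf hpq, hp6.vertexCharge_y hP hp, hq6.vertexCharge_y hP hq]
  norm_num

theorem edgeCharge_of_mem_Mset1''' (hP : (P : Set (P3 α)).PairwiseDisjoint P3.verts)
    (h : f ∈ Mset1''' P M) : edgeCharge P M f = 1 / 12 := by
  obtain ⟨h1, -, g, hg, hfg⟩ := mem_Mset1'''.1 h
  obtain ⟨r, hr, hcharge⟩ := exists_vertexCharge_of_mem_Mset1 hP h1
  obtain ⟨v, hv, hzero⟩ := exists_vertexCharge_eq_zero hP hg hfg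
  have hrv : r ≠ v := by
    rintro rfl
    norm_num [hzero] at hcharge
  rw [edgeCharge_eq_add hr hv hrv, hcharge, hzero, add_zero]

theorem IsMatching.edgeCharge_le_of_mem_Mset2 (hM : IsMatching M)
    (hP : (P : Set (P3 α)).PairwiseDisjoint P3.verts) (h : f ∈ Mset2 P M) :
    edgeCharge P M f ≤ 1 / 6 := by
  obtain ⟨hf, ⟨g, hg, hfg⟩, hall⟩ := mem_Mset2.1 h
  obtain ⟨r, hr, hzero⟩ := exists_vertexCharge_eq_zero hP (hall g hg hfg) hfg
  linarith [hM.edgeCharge_le_add hP hf hr]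

theorem disjoint_Mset1_Mset2 (hP : (P : Set (P3 α)).PairwiseDisjoint P3.verts) :
    Disjoint (Mset1 P M) (Mset2 P M) := by
  refine Finset.disjoint_left.2 fun f h1 h2 => ?_
  obtain ⟨-, g, ⟨⟨p, hp, hgp⟩, hmid⟩, hfg⟩ := mem_Mset1.1 h1
  obtain ⟨hpP, h6⟩ := mem_psel.1 hp
  obtain ⟨⟨q, hq, hgq⟩, -⟩ := (mem_Mset2.1 h2).2.2 g ⟨⟨p, hpP, hgp⟩, hmid⟩ hfg
  obtain ⟨hqP, h234⟩ := mem_psel.1 hq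
  have hmem := Sym2.out_fst_mem g
  obtain rfl := eq_of_mem_verts hP hpP hqP (P3.mem_verts_of_mem_edges hgp hmem)
    (P3.mem_verts_of_mem_edges hgq hmem)
  grind [cls2, cls3, cls4, cls6]

theorem disjoint_Mset1_Mset4 (hP : (P : Set (P3 α)).PairwiseDisjoint P3.verts) :
    Disjoint (Mset1 P M) (Mset4 P M) := by
  refine Finset.disjoint_left.2 fun f h1 h4 => ?_
  obtain ⟨r, hr, hcharge⟩ := exists_vertexCharge_of_mem_Mset1 hP h1
  norm_num [vertexCharge_eq_zero_of_mem_Mset4 hP h4 hr] at hcharge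

theorem disjoint_Mset2_Mset4 (hP : (P : Set (P3 α)).PairwiseDisjoint P3.verts) :
    Disjoint (Mset2 P M) (Mset4 P M) := by
  refine Finset.disjoint_left.2 fun f h2 h4 => ?_
  obtain ⟨-, ⟨g, hg, hfg⟩, hall⟩ := mem_Mset2.1 h2
  obtain ⟨p, hp, h234, r, hrf, hrp⟩ := exists_cls234_of_shares (hall g hg hfg) hfg
  obtain ⟨q, hq, h5, hfq⟩ := exists_mem_Esub_cls5 h4
  obtain rfl := eq_of_mem_verts hP hp hq hrp (P3.mem_verts_of_mem_edges hfq hrf)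
  grind [cls2, cls3, cls4, cls5]

/-- The coefficient of `w f` in the terms of the lower bound that concern the matching `M`. -/
noncomputable def edgeRate (P : Finset (P3 α)) (M : Finset (Sym2 α)) (f : Sym2 α) : ℝ :=
  2 / 3 + (if f ∈ Mset1' P M then 1 / 12 else 0) + (if f ∈ Mset1'' P M then 1 / 6 else 0) +
    (if f ∈ Mset1''' P M then 1 / 4 else 0) + (if f ∈ Mset2 P M then 1 / 6 else 0) +
    (if f ∈ Mset4 P M then 1 / 3 else 0)

theorem IsMatching.edgeRate_add_edgeCharge_le_of_mem_Mset1 (hM : IsMatching M)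
    (hP : (P : Set (P3 α)).PairwiseDisjoint P3.verts) (h : f ∈ Mset1 P M) :
    edgeRate P M f + edgeCharge P M f ≤ 1 := by
  rw [edgeRate, if_neg (Finset.disjoint_left.1 (disjoint_Mset1_Mset2 hP) h),
    if_neg (Finset.disjoint_left.1 (disjoint_Mset1_Mset4 hP) h)]
  have hquarter := hM.edgeCharge_le_of_mem_Mset1 hP h
  by_cases h1' : f ∈ Mset1' P M
  · obtain ⟨-, hone, hnone⟩ := mem_Mset1'.1 h1'
    have h1'' : f ∉ Mset1'' P M := by
      rw [mem_Mset1'']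
      omega
    have h1''' : f ∉ Mset1''' P M := by
      rw [mem_Mset1''']
      exact fun ⟨_, _, g, hg, hfg⟩ => hnone g hg hfg
    rw [if_pos h1', if_neg h1'', if_neg h1''']
    linarith
  by_cases h1'' : f ∈ Mset1'' P M
  · have h1''' : f ∉ Mset1''' P M := by
      have htwo := (mem_Mset1''.1 h1'').2
      rw [mem_Mset1''']
      omega
    rw [if_neg h1', if_pos h1'', if_neg h1''', edgeCharge_of_mem_Mset1'' hP h1'']
    norm_num
  rw [if_neg h1', if_neg h1'']
  split_ifs with h1'''
  · rw [edgeCharge_of_mem_Mset1''' hP h1''']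
    norm_num
  · linarith

theorem IsMatching.edgeRate_add_edgeCharge_le (hM : IsMatching M)
    (hP : (P : Set (P3 α)).PairwiseDisjoint P3.verts) (hf : f ∈ M) :
    edgeRate P M f + edgeCharge P M f ≤ 1 := by
  by_cases h1 : f ∈ Mset1 P M
  · exact hM.edgeRate_add_edgeCharge_le_of_mem_Mset1 hP h1
  rw [edgeRate, if_neg fun h => h1 (mem_Mset1'.1 h).1, if_neg fun h => h1 (mem_Mset1''.1 h).1,
    if_neg fun h => h1 (mem_Mset1'''.1 h).1]
  by_cases h4 : f ∈ Mset4 P M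
  · rw [if_neg (Finset.disjoint_right.1 (disjoint_Mset2_Mset4 hP) h4), if_pos h4,
      edgeCharge_eq_zero_of_mem_Mset4 hP h4]
    norm_num
  · rw [if_neg h4]
    split_ifs with h2
    · linarith [hM.edgeCharge_le_of_mem_Mset2 hP h2]
    · linarith [hM.edgeCharge_le_add hP hf (Sym2.out_fst_mem f), vertexCharge_le hP M f.out.1]

theorem sum_edgeRate (w : Sym2 α → ℝ) (P : Finset (P3 α)) (M : Finset (Sym2 α)) :
    ∑ f ∈ M, edgeRate P M f * w f =
      2 / 3 * ew w M + 1 / 12 * ew w (Mset1' P M) + 1 / 6 * ew w (Mset1'' P M) +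
        1 / 4 * ew w (Mset1''' P M) + 1 / 6 * ew w (Mset2 P M) + 1 / 3 * ew w (Mset4 P M) := by
  have h1 : Mset1 P M ⊆ M := Finset.filter_subset _ _
  have h1' : Mset1' P M ⊆ M := (Finset.filter_subset _ _).trans h1
  have h1'' : Mset1'' P M ⊆ M := (Finset.filter_subset _ _).trans h1
  have h1''' : Mset1''' P M ⊆ M := (Finset.filter_subset _ _).trans h1
  have h2 : Mset2 P M ⊆ M := Finset.filter_subset _ _
  have h4 : Mset4 P M ⊆ M := Finset.inter_subset_left
  rw [ew_eq_sum_ite w h1', ew_eq_sum_ite w h1'', ew_eq_sum_ite w h1''', ew_eq_sum_ite w h2,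
    ew_eq_sum_ite w h4, ew]
  simp only [Finset.mul_sum, ← Finset.sum_add_distrib, edgeRate, add_mul, ite_mul, mul_ite,
    zero_mul, mul_zero]

theorem IsMatching.sum_edgeRate_add_sum_pathCharge_le (hM : IsMatching M)
    (hP : (P : Set (P3 α)).PairwiseDisjoint P3.verts) (hw : ∀ e, 0 ≤ w e) :
    ∑ f ∈ M, edgeRate P M f * w f + ∑ p ∈ P, pathCharge w M p ≤ ew w M := by
  rw [hM.sum_pathCharge, ← Finset.sum_add_distrib, ew]
  refine Finset.sum_le_sum fun f hf => ?_
  rw [← add_mul]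
  exact mul_le_of_le_one_left (hw f) (hM.edgeRate_add_edgeCharge_le hP hf)

end EdgeCharges

section PathWeights

variable {α : Type*} [DecidableEq α] {w : Sym2 α → ℝ} {M : Finset (Sym2 α)}
  {P : Finset (P3 α)} {c : P3 α → Prop} {f : P3 α → Sym2 α}

theorem IsMatching.sum_weight_le_sum_cost_add_sum_pathCharge (hM : IsMatching M)
    (hw : ∀ e, 0 ≤ w e) (P : Finset (P3 α)) :
    1 / 2 * ∑ p ∈ psel P (fun p => (cls2 M p ∨ cls3 M p ∨ cls4 M p) ∨ cls7 M p),
        w (selectedEdge w M p) +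
      1 / 4 * ∑ p ∈ psel P (fun p => cls6 M p ∨ cls8 M p), p.wt w ≤
    1 / 2 * ∑ p ∈ psel P (fun p => (cls2 M p ∨ cls3 M p ∨ cls4 M p) ∨ cls7 M p),
        cost w M (selectedEdge w M p) +
      1 / 4 * ∑ p ∈ psel P (fun p => cls6 M p ∨ cls8 M p),
        (cost w M s(p.x, p.y) + cost w M s(p.y, p.z)) + ∑ p ∈ P, pathCharge w M p := by
  have hselected : ∀ p, ((cls2 M p ∨ cls3 M p ∨ cls4 M p) ∨ cls7 M p) →
      w (selectedEdge w M p) ≤ cost w M (selectedEdge w M p) + 2 * pathCharge w M p := by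
    rintro p (h | h)
    · rw [(isMiddle_selectedEdge h w).cost_eq]
      linarith [pathCharge_nonneg hw M p]
    · exact h.selectedEdge_le hM hw
  have hwt : ∀ p, cls6 M p ∨ cls8 M p →
      p.wt w ≤ cost w M s(p.x, p.y) + cost w M s(p.y, p.z) + 4 * pathCharge w M p := fun p h =>
    h.elim (fun h => h.wt_le hw) (fun h => h.wt_le hw)
  have hsum_selected := Finset.sum_le_sum fun p hp => hselected p (mem_psel (P := P).1 hp).2
  have hsum_wt := Finset.sum_le_sum fun p hp => hwt p (mem_psel (P := P).1 hp).2
  rw [Finset.sum_add_distrib, ← Finset.mul_sum] at hsum_selected hsum_wt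
  have hsum_charge := Finset.sum_le_sum_of_subset_of_nonneg
    (psel_subset P fun p => ((cls2 M p ∨ cls3 M p ∨ cls4 M p) ∨ cls7 M p) ∨ (cls6 M p ∨ cls8 M p))
    fun p _ _ => pathCharge_nonneg hw M p
  rw [sum_psel_or (fun p => by grind [cls2, cls3, cls4, cls6, cls7, cls8, exOne] :
    ∀ p, ((cls2 M p ∨ cls3 M p ∨ cls4 M p) ∨ cls7 M p) → ¬ (cls6 M p ∨ cls8 M p))] at hsum_charge
  linarith

theorem ew_image_psel (hP : (P : Set (P3 α)).PairwiseDisjoint P3.verts)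
    (h : ∀ p, c p → f p = selectedEdge w M p) :
    ew w ((psel P c).image f) = ∑ p ∈ psel P c, w (selectedEdge w M p) := by
  have hf : ∀ p ∈ psel P c, f p = selectedEdge w M p := fun p hp => h p (mem_psel.1 hp).2
  rw [ew, sum_image_of_mem_edges (hP.subset (Finset.coe_subset.2 (psel_subset P c)))
    fun p hp => hf p hp ▸ selectedEdge_mem_edges w M p]
  exact Finset.sum_congr rfl fun p hp => congrArg w (hf p hp)

theorem ew_Esub_psel (hP : (P : Set (P3 α)).PairwiseDisjoint P3.verts) (w : Sym2 α → ℝ)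
    (c : P3 α → Prop) : ew w (Esub (psel P c)) = ∑ p ∈ psel P c, p.wt w :=
  sum_Esub (hP.subset (Finset.coe_subset.2 (psel_subset P c))) w

theorem Mset3_subset_Y7 (P : Finset (P3 α)) (M : Finset (Sym2 α)) : Mset3 P M ⊆ Y7 P M := by
  intro f hf
  obtain ⟨hfM, hfE⟩ := Finset.mem_inter.1 hf
  refine Finset.mem_sdiff.2 ⟨hfE, fun hfX => ?_⟩
  obtain ⟨p, hp, rfl⟩ := Finset.mem_image.1 hfX
  rcases (mem_psel.1 hp).2.2 with ⟨hxy, hyz⟩ | ⟨hxy, -⟩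
  · rw [if_pos hxy] at hfM
    exact hyz hfM
  · rw [if_neg hxy] at hfM
    exact hxy hfM

/-- The part of the lower bound that concerns the edges of the 3-paths rather than `M`. -/
noncomputable def pathBound (w : Sym2 α → ℝ) (P : Finset (P3 α)) (M : Finset (Sym2 α)) : ℝ :=
  1 / 2 * ew w (X2 P M) + 1 / 2 * ew w (X3 w P M) + 1 / 2 * ew w (X4 w P M) + ew w (X5 P M) +
    1 / 2 * ew w (X7 P M) + 1 / 4 * ew w (Esub (psel P (cls6 M))) +
    1 / 4 * ew w (Esub (psel P (cls8 M)))

theorem pathBound_eq (hP : (P : Set (P3 α)).PairwiseDisjoint P3.verts) :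
    pathBound w P M = ∑ p ∈ psel P (cls5 M), w (selectedEdge w M p) +
      1 / 2 * ∑ p ∈ psel P (fun p => (cls2 M p ∨ cls3 M p ∨ cls4 M p) ∨ cls7 M p),
        w (selectedEdge w M p) +
      1 / 4 * ∑ p ∈ psel P (fun p => cls6 M p ∨ cls8 M p), p.wt w := by
  have h2 : ew w (X2 P M) = _ := ew_image_psel hP fun p h => (selectedEdge_of_cls2 h).symm
  have h3 : ew w (X3 w P M) = _ :=
    ew_image_psel hP fun p h => (selectedEdge_of_cls3_or_cls4 (.inl h)).symm
  have h4 : ew w (X4 w P M) = _ :=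
    ew_image_psel hP fun p h => (selectedEdge_of_cls3_or_cls4 (.inr h)).symm
  have h5 : ew w (X5 P M) = _ :=
    ew_image_psel hP fun p h => (selectedEdge_of_cls5_or_cls7 (.inl h)).symm
  have h7 : ew w (X7 P M) = _ :=
    ew_image_psel hP fun p h => (selectedEdge_of_cls5_or_cls7 (.inr h)).symm
  rw [pathBound, h2, h3, h4, h5, h7, ew_Esub_psel hP, ew_Esub_psel hP,
    sum_psel_or (fun p => by grind [cls6, cls8] : ∀ p, cls6 M p → ¬ cls8 M p),
    sum_psel_or (fun p => by grind [cls2, cls3, cls4, cls7] :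
      ∀ p, (cls2 M p ∨ cls3 M p ∨ cls4 M p) → ¬ cls7 M p),
    sum_psel_or (fun p => by grind [cls2, cls3, cls4] : ∀ p, cls2 M p → ¬ (cls3 M p ∨ cls4 M p)),
    sum_psel_or (fun p => by grind [cls3, cls4] : ∀ p, cls3 M p → ¬ cls4 M p)]
  ring

theorem IsMatching.exists_isPacking_pathBound_le [Fintype α] (hM : IsMatching M)
    (hw : ∀ e, 0 ≤ w e) (hcard : Fintype.card α = 3 * M.card)
    (hP : (P : Set (P3 α)).PairwiseDisjoint P3.verts) :
    ∃ Q : Finset (P3 α), IsPacking Q ∧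
      ew w M + pathBound w P M ≤ pw w Q + ∑ p ∈ P, pathCharge w M p := by
  obtain ⟨Q, hQ, hle⟩ := hM.exists_isPacking_of_pairwiseDisjoint hw hcard hP
  have hcost5 : ∀ p ∈ psel P (cls5 M), cost w M (selectedEdge w M p) = w (selectedEdge w M p) :=
    fun p hp => ((mem_psel.1 hp).2.isMiddle_selectedEdge w).cost_eq w
  rw [Finset.sum_congr rfl hcost5] at hle
  refine ⟨Q, hQ, ?_⟩
  rw [pathBound_eq hP]
  linarith [hM.sum_weight_le_sum_cost_add_sum_pathCharge hw P]

end PathWeights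

section LowerBound

variable {α : Type*} [Fintype α] [DecidableEq α] {P : Finset (P3 α)}

theorem IsPacking.pairwiseDisjoint (hP : IsPacking P) :
    (P : Set (P3 α)).PairwiseDisjoint P3.verts := fun p hp q hq hpq => hP.2.1 p hp q hq hpq

theorem IsPacking.card_eq (hP : IsPacking P) : Fintype.card α = 3 * (Fintype.card α / 3) := by
  have huniv : (Finset.univ : Finset α) = P.biUnion P3.verts :=
    (Finset.eq_univ_of_forall fun v => Finset.mem_biUnion.2 (hP.2.2 v)).symm
  rw [← hP.1, ← Finset.card_univ, huniv, Finset.card_biUnion hP.2.1,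
    Finset.sum_const_nat fun p _ => p.card_verts, mul_comm]

end LowerBound

theorem statement_14_general (w : Sym2 V → ℝ) (hw : ∀ e : Sym2 V, 0 ≤ w e)
    (M : Finset (Sym2 V)) (hM : IsMatching M) (hcard : M.card = Fintype.card V / 3)
    (Pstar : Finset (P3 V)) (hP : IsPacking Pstar) :
    ∃ P : Finset (P3 V), IsPacking P ∧
      (2 / 3 : ℝ) * ew w M + (1 / 12 : ℝ) * ew w (Mset1' Pstar M) +
        (1 / 6 : ℝ) * ew w (Mset1'' Pstar M) + (1 / 4 : ℝ) * ew w (Mset1''' Pstar M) +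
        (1 / 6 : ℝ) * ew w (Mset2 Pstar M) + (1 / 4 : ℝ) * ew w (Mset3 Pstar M) +
        (1 / 3 : ℝ) * ew w (Mset4 Pstar M) + (1 / 2 : ℝ) * ew w (X2 Pstar M) +
        (1 / 2 : ℝ) * ew w (X3 w Pstar M) + (1 / 2 : ℝ) * ew w (X4 w Pstar M) +
        ew w (X5 Pstar M) + (1 / 2 : ℝ) * ew w (X7 Pstar M) -
        (1 / 4 : ℝ) * ew w (Y7 Pstar M) + (1 / 4 : ℝ) * ew w (Esub (psel Pstar (cls6 M))) +
        (1 / 4 : ℝ) * ew w (Esub (psel Pstar (cls8 M))) ≤ pw w P := by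
  obtain ⟨P, hPpack, hle⟩ := hM.exists_isPacking_pathBound_le hw
    (hcard ▸ hP.card_eq) hP.pairwiseDisjoint
  refine ⟨P, hPpack, ?_⟩
  have hrate := hM.sum_edgeRate_add_sum_pathCharge_le hP.pairwiseDisjoint hw
  have hY7 : ew w (Mset3 Pstar M) ≤ ew w (Y7 Pstar M) :=
    Finset.sum_le_sum_of_subset_of_nonneg (Mset3_subset_Y7 Pstar M) fun e _ _ => hw e
  rw [sum_edgeRate] at hrate
  rw [pathBound] at hle
  linarith

theorem statement_14 (n : ℕ) (hn : Fintype.card V = n) (h3 : 3 ∣ n)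
    (w : Sym2 V → ℝ) (hw : ∀ e : Sym2 V, 0 ≤ w e)
    (M : Finset (Sym2 V)) (hM : IsMaxMatchingOfSize w (n / 3) M)
    (Pstar : Finset (P3 V)) (hP : IsMaxPacking w Pstar) (hAss : Ass Pstar M) :
    ∃ P : Finset (P3 V), IsPacking P ∧
      (2 / 3 : ℝ) * ew w M + (1 / 12 : ℝ) * ew w (Mset1' Pstar M) +
        (1 / 6 : ℝ) * ew w (Mset1'' Pstar M) + (1 / 4 : ℝ) * ew w (Mset1''' Pstar M) +
        (1 / 6 : ℝ) * ew w (Mset2 Pstar M) + (1 / 4 : ℝ) * ew w (Mset3 Pstar M) +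
        (1 / 3 : ℝ) * ew w (Mset4 Pstar M) + (1 / 2 : ℝ) * ew w (X2 Pstar M) +
        (1 / 2 : ℝ) * ew w (X3 w Pstar M) + (1 / 2 : ℝ) * ew w (X4 w Pstar M) +
        ew w (X5 Pstar M) + (1 / 2 : ℝ) * ew w (X7 Pstar M) -
        (1 / 4 : ℝ) * ew w (Y7 Pstar M) + (1 / 4 : ℝ) * ew w (Esub (psel Pstar (cls6 M))) +
        (1 / 4 : ℝ) * ew w (Esub (psel Pstar (cls8 M))) ≤ pw w P :=
  statement_14_general w hw M hM.1 (hn ▸ hM.2.1) Pstar hP.1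

end MW3PP
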